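/- arXiv:1908.08826 — 2 statements merged into one kernel-verified Lean document; each statement's English description precedes it below -/
import Mathlib

section
/- A one-relator group G = ⟨g₁,…,g_n | r^m⟩ with n ≥ 1, m ≥ 1 and r not a proper power has Euler characteristic χ(G) = 1 − n + 1/m. Consequently, if n ≥ 2 then χ(G) ≤ 0, and χ(G) = 0 if and only if n = 2 and m = 1 (or n = 1 and the relator is trivial-like with m arbitrary giving 1/m = n − 1). -/
open CategoryTheory

noncomputable def trivialZMod (G : Type) [Group G] : ModuleCat (MonoidAlgebra ℤ G) :=
  (Rep.equivalenceModuleMonoidAlgebra.functor.obj (Rep.trivial ℤ G ℤ))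

def TypeFP (G : Type) [Group G] : Prop :=
  ∃ (P : ProjectiveResolution (trivialZMod G)) (n : ℕ),
    (∀ i, Module.Finite (MonoidAlgebra ℤ G) (P.complex.X i)) ∧
    ∀ i, n < i → Subsingleton (P.complex.X i)

def TypeVFP (G : Type) [Group G] : Prop :=
  ∃ K : Subgroup G, K.index ≠ 0 ∧ TypeFP K

/-- `HasFreeResOfRanks G n r`: the trivial `ℤG`-module `ℤ` admits a free resolution of
length `≤ n` in which the `i`-th module is free of finite rank `r i`. -/
def HasFreeResOfRanks (G : Type) [Group G] (n : ℕ) (r : ℕ → ℕ) : Prop :=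
  ∃ P : ProjectiveResolution (trivialZMod G),
    (∀ i, Nonempty ((P.complex.X i) ≃ₗ[MonoidAlgebra ℤ G]
      (Fin (r i) →₀ MonoidAlgebra ℤ G))) ∧
    ∀ i, n < i → r i = 0

/-- `EulerCharRel G q` asserts that the Euler characteristic of the type-`VFP` group `G`
(in the sense of Brown) equals the rational number `q`: some finite-index subgroup `K`
has a finite free resolution of the trivial module, and `q` is the alternating sum of
the ranks divided by the index `[G : K]`. -/
def EulerCharRel (G : Type) [Group G] (q : ℚ) : Prop :=
  ∃ (K : Subgroup G) (n : ℕ) (r : ℕ → ℕ), K.index ≠ 0 ∧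
    HasFreeResOfRanks K n r ∧
    q = (∑ i ∈ Finset.range (n + 1), (-1 : ℚ) ^ i * r i) / K.index

/-!
Let `c` be a cyclically reduced conjugate of the root of the relator. Free groups embed into
unitriangular integer matrices (Magnus), and reducing a block of entries modulo a suitable integer
gives a finite quotient `H` of the one-relator group in which `c` has exact order `m`. The kernel
acts freely on the Cayley complex of `⟨g₁, …, g_n | c ^ m⟩`, in which the `m` cells with a common
boundary loop are identified, with `|H|` orbits of vertices, `n |H|` of edges and `|H| / m` of
cells.

That this complex is contractible is Lyndon's identity theorem. The Magnus representations also
bi-order the free group, and this stacks the passages of the lifts of the cyclic word `c` over each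
edge and vertex. In a finite union of lifts which reads no edge exactly once, every lift is
somewhere on top of an edge without being on top of the vertex before it. Hence the number of lifts
is at most the number of edges minus the number of vertices, and so at most the first Betti number.
When the boundaries of the lifts span the cycles, they are therefore linearly independent.
-/

lemma val_zpow_of_mul_self_eq_zero {R : Type*} [Ring R] {x : R} (hx : x * x = 0) {u : Rˣ}
    (hu : (u : R) = 1 + x) (e : ℤ) : ((u ^ e : Rˣ) : R) = 1 + e • x := by
  have hu' : ((u⁻¹ : Rˣ) : R) = 1 - x :=
    Units.inv_eq_of_mul_eq_one_right (by rw [hu, add_mul, mul_sub, mul_sub, hx]; simp)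
  induction e with
  | zero => simp
  | succ e ih =>
    rw [zpow_add_one, Units.val_mul, ih, hu]
    simp only [mul_add, add_mul, smul_mul_assoc, hx, smul_zero, one_mul, mul_one, add_smul,
      one_smul]
    abel
  | pred e ih =>
    rw [zpow_sub_one, Units.val_mul, ih, hu']
    simp only [mul_sub, add_mul, smul_mul_assoc, hx, smul_zero, one_mul, mul_one, sub_smul,
      one_smul]
    abel

/-- The group element spelled by a list of syllables `a ^ e`. -/
def syllableProd {α : Type*} (S : List (α × ℤ)) : FreeGroup α :=
  (S.map fun s => FreeGroup.of s.1 ^ s.2).prod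

lemma syllableProd_cons {α : Type*} (s : α × ℤ) (S : List (α × ℤ)) :
    syllableProd (s :: S) = FreeGroup.of s.1 ^ s.2 * syllableProd S := by
  simp [syllableProd]

open Monoid.CoprodI in
lemma exists_syllableProd_eq {α : Type*} (w : FreeGroup α) :
    ∃ S : List (α × ℤ), (∀ s ∈ S, s.2 ≠ 0) ∧ S.IsChain (fun s t => s.1 ≠ t.1) ∧
      syllableProd S = w := by
  classical
  let W := Word.equiv (freeGroupEquivCoprodI w)
  let e := FreeGroup.freeGroupUnitEquivInt
  refine ⟨W.toList.map fun s => (s.1, e s.2), ?_, ?_, ?_⟩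
  · intro s hs h0
    obtain ⟨t, ht, rfl⟩ := List.mem_map.1 hs
    exact W.ne_one t ht (e.injective (h0.trans (by rfl)))
  · exact (List.isChain_map _).2 W.chain_ne
  · have hsyl (t : Σ _ : α, FreeGroup Unit) :
        FreeGroup.of t.1 ^ e t.2 = freeGroupEquivCoprodI.symm (of (i := t.1) t.2) := by
      conv_rhs => rw [← e.symm_apply_apply t.2]
      change _ = Monoid.CoprodI.lift (fun i => FreeGroup.lift fun _ => FreeGroup.of i)
        (of (i := t.1) (FreeGroup.of () ^ e t.2))
      simp
    have hW : freeGroupEquivCoprodI.symm W.prod = w := by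
      rw [show W.prod = freeGroupEquivCoprodI w from Word.equiv.symm_apply_apply _,
        MulEquiv.symm_apply_apply]
    rw [← hW, Word.prod, map_list_prod, syllableProd, List.map_map, List.map_map]
    exact congrArg List.prod (List.map_congr_left fun t _ => hsyl t)

/-- A partial labelling of the superdiagonal of an `ℕ × ℕ` matrix by generators, in which no
generator occurs at two consecutive places. -/
structure MagnusPattern (α : Type*) where
  label : ℕ → Option α
  label_succ_ne : ∀ i a, label i = some a → label (i + 1) ≠ some a

namespace MagnusPattern

variable {α : Type*} (c : MagnusPattern α)

open Classical in
/-- The matrix with ones at the superdiagonal places labelled `a`; it squares to zero because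
these places are never adjacent. -/
noncomputable def shift (a : α) : IncidenceAlgebra ℤ ℕ :=
  ⟨fun i j => if j = i + 1 ∧ c.label i = some a then 1 else 0, fun _ _ h =>
    if_neg fun h' => h (by omega)⟩

open Classical in
lemma shift_apply (a : α) (i j : ℕ) :
    c.shift a i j = if j = i + 1 ∧ c.label i = some a then 1 else 0 := rfl

open Classical in
lemma shift_mul_apply (a : α) (f : IncidenceAlgebra ℤ ℕ) (i j : ℕ) :
    (c.shift a * f) i j = if c.label i = some a then f (i + 1) j else 0 := by
  rw [IncidenceAlgebra.mul_apply]
  by_cases hj : i + 1 ≤ j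
  · rw [Finset.sum_eq_single_of_mem (i + 1) (Finset.mem_Icc.2 ⟨by omega, hj⟩)]
    · simp [shift_apply]
    · intro k _ hk; simp [shift_apply, hk]
  · rw [IncidenceAlgebra.apply_eq_zero_of_not_le hj, ite_self]
    refine Finset.sum_eq_zero fun k hk => ?_
    have : k ≠ i + 1 := by rw [Finset.mem_Icc] at hk; omega
    simp [shift_apply, this]

lemma shift_mul_shift (a : α) : c.shift a * c.shift a = 0 := by
  classical
  refine IncidenceAlgebra.ext fun i j _ => ?_
  rw [shift_mul_apply]
  split_ifs with h
  · simp [shift_apply, c.label_succ_ne i a h]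
  · rfl

/-- The unipotent matrix by which a generator acts in the Magnus representation. -/
noncomputable def unipotent (a : α) : (IncidenceAlgebra ℤ ℕ)ˣ where
  val := 1 + c.shift a
  inv := 1 - c.shift a
  val_inv := by rw [add_mul, mul_sub, mul_sub, shift_mul_shift]; simp
  inv_val := by rw [sub_mul, mul_add, mul_add, shift_mul_shift]; simp

/-- The Magnus representation `a ↦ 1 + shift a` of the free group by unitriangular matrices. -/
noncomputable def magnusRep : FreeGroup α →* (IncidenceAlgebra ℤ ℕ)ˣ :=
  FreeGroup.lift c.unipotent

/-- The matrix entries of the Magnus representation, that is, the coefficients of the Magnus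
expansion of `w`. -/
noncomputable def coeff (w : FreeGroup α) (i j : ℕ) : ℤ :=
  (c.magnusRep w : IncidenceAlgebra ℤ ℕ) i j

lemma coeff_mul (u w : FreeGroup α) (i j : ℕ) :
    c.coeff (u * w) i j = ∑ k ∈ Finset.Icc i j, c.coeff u i k * c.coeff w k j := by
  simp [coeff, IncidenceAlgebra.mul_apply]

lemma coeff_one (i j : ℕ) : c.coeff 1 i j = if i = j then 1 else 0 := by
  simp [coeff]

lemma coeff_of_lt (w : FreeGroup α) {i j : ℕ} (h : j < i) : c.coeff w i j = 0 :=
  IncidenceAlgebra.apply_eq_zero_of_not_le (by omega) _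

lemma coeff_of_zpow_mul [DecidableEq α] (a : α) (e : ℤ) (w : FreeGroup α) (i j : ℕ) :
    c.coeff (FreeGroup.of a ^ e * w) i j =
      c.coeff w i j + if c.label i = some a then e * c.coeff w (i + 1) j else 0 := by
  classical
  rw [coeff, map_mul, map_zpow, magnusRep, FreeGroup.lift_apply_of, Units.val_mul,
    val_zpow_of_mul_self_eq_zero (c.shift_mul_shift a) rfl, add_mul, one_mul,
    IncidenceAlgebra.add_apply, smul_mul_assoc, IncidenceAlgebra.constSMul_apply, shift_mul_apply]
  simp only [coeff, magnusRep, smul_eq_mul, mul_ite, mul_zero]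

lemma coeff_self (w : FreeGroup α) (i : ℕ) : c.coeff w i i = 1 := by
  classical
  have of_zpow (a : α) (e : ℤ) : c.coeff (FreeGroup.of a ^ e) i i = 1 := by
    simpa [coeff_one] using c.coeff_of_zpow_mul a e 1 i i
  induction w using FreeGroup.induction_on with
  | C1 => simp [coeff_one]
  | of a => simpa using of_zpow a 1
  | inv_of a _ => simpa using of_zpow a (-1)
  | mul u w hu hw => rw [coeff_mul]; simp [hu, hw]

lemma coeff_syllableProd_of_lt (S : List (α × ℤ)) {i j : ℕ} (h : i + S.length < j) :
    c.coeff (syllableProd S) i j = 0 := by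
  classical
  induction S generalizing i j with
  | nil => simp only [List.length_nil] at h; simp [syllableProd, coeff_one]; omega
  | cons s S ih =>
    simp only [List.length_cons] at h
    rw [syllableProd_cons, coeff_of_zpow_mul, ih (by omega), ih (by omega)]
    simp

lemma coeff_syllableProd (S : List (α × ℤ)) {i : ℕ}
    (h : ∀ t (ht : t < S.length), c.label (i + t) = some (S[t]).1) :
    c.coeff (syllableProd S) i (i + S.length) = (S.map Prod.snd).prod := by
  classical
  induction S generalizing i with
  | nil => simp [syllableProd, coeff_one]
  | cons s S ih =>
    have hi : c.label i = some s.1 := h 0 (by simp)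
    have hS := ih (i := i + 1) fun t ht => by
      rw [add_assoc, add_comm 1 t]
      exact h (t + 1) (Nat.succ_lt_succ ht)
    rw [syllableProd_cons, coeff_of_zpow_mul, coeff_syllableProd_of_lt _ _ (by simp), if_pos hi,
      List.length_cons, show i + (S.length + 1) = i + 1 + S.length by ring, hS]
    simp

lemma exists_coeff_ne_zero {w : FreeGroup α} (hw : w ≠ 1) :
    ∃ (d : ℕ) (c : MagnusPattern α) (i : ℕ), 0 < d ∧ c.coeff w i (i + d) ≠ 0 := by
  obtain ⟨S, hne, hchain, rfl⟩ := exists_syllableProd_eq w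
  let c : MagnusPattern α := ⟨fun t => S[t]?.map Prod.fst, by
    intro i a hi hi'
    simp only [Option.map_eq_some_iff, List.getElem?_eq_some_iff] at hi hi'
    obtain ⟨x, ⟨hx, rfl⟩, hxa⟩ := hi
    obtain ⟨y, ⟨hy, rfl⟩, hya⟩ := hi'
    exact List.isChain_iff_getElem.1 hchain i hy (hxa.trans hya.symm)⟩
  refine ⟨S.length, c, 0, ?_, ?_⟩
  · rw [List.length_pos_iff]
    rintro rfl
    exact hw rfl
  · rw [c.coeff_syllableProd S fun t ht => by simp [c, ht]]
    intro h0
    obtain ⟨s, hs, h⟩ := List.mem_map.1 (List.prod_eq_zero_iff.1 h0)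
    exact hne s hs h

lemma exists_min_coeff_ne_zero {w : FreeGroup α} (hw : w ≠ 1) :
    ∃ (d : ℕ) (c : MagnusPattern α) (i : ℕ), 0 < d ∧ c.coeff w i (i + d) ≠ 0 ∧
      ∀ d', 0 < d' → d' < d → ∀ j, c.coeff w j (j + d') = 0 := by
  classical
  have hex := exists_coeff_ne_zero hw
  obtain ⟨c, i, hd, hne⟩ := Nat.find_spec hex
  refine ⟨Nat.find hex, c, i, hd, hne, fun d' hd' hlt j => ?_⟩
  by_contra h
  exact Nat.find_min hex hlt ⟨c, j, hd', h⟩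

variable {c} {a b : FreeGroup α} {d : ℕ}

lemma coeff_eq_of_lt_add (h : ∀ d' < d, ∀ i, c.coeff a i (i + d') = c.coeff b i (i + d'))
    {i j : ℕ} (hij : j < i + d) : c.coeff a i j = c.coeff b i j := by
  by_cases hle : i ≤ j
  · obtain ⟨k, rfl⟩ := Nat.exists_eq_add_of_le hle
    exact h k (by omega) i
  · rw [c.coeff_of_lt a (by omega), c.coeff_of_lt b (by omega)]

lemma coeff_mul_left_sub (h : ∀ d' < d, ∀ i, c.coeff a i (i + d') = c.coeff b i (i + d'))
    (u : FreeGroup α) (i : ℕ) :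
    c.coeff (u * a) i (i + d) - c.coeff (u * b) i (i + d) =
      c.coeff a i (i + d) - c.coeff b i (i + d) := by
  rw [coeff_mul, coeff_mul, ← Finset.sum_sub_distrib,
    Finset.sum_eq_single_of_mem i (by simp) fun k hk hki => ?_]
  · simp [coeff_self]
  · rw [Finset.mem_Icc] at hk
    rw [coeff_eq_of_lt_add h (by omega), sub_self]

lemma coeff_mul_right_sub (h : ∀ d' < d, ∀ i, c.coeff a i (i + d') = c.coeff b i (i + d'))
    (u : FreeGroup α) (i : ℕ) :
    c.coeff (a * u) i (i + d) - c.coeff (b * u) i (i + d) =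
      c.coeff a i (i + d) - c.coeff b i (i + d) := by
  rw [coeff_mul, coeff_mul, ← Finset.sum_sub_distrib,
    Finset.sum_eq_single_of_mem (i + d) (by simp) fun k hk hki => ?_]
  · simp [coeff_self]
  · rw [Finset.mem_Icc] at hk
    rw [coeff_eq_of_lt_add h (by omega), sub_self]

/-- The family of all matrix entries of `w` in all Magnus representations, sorted by their distance
to the diagonal. Its lexicographic order gives the bi-ordering of the free group. -/
noncomputable def expansion (w : FreeGroup α) : Lex (ℕ → Lex (MagnusPattern α × ℕ → ℤ)) :=
  toLex fun d => toLex fun k => k.1.coeff w k.2 (k.2 + d)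

lemma expansion_injective : Function.Injective (expansion (α := α)) := by
  intro a b hab
  by_contra hne
  obtain ⟨d, c, i, hd, hc⟩ := exists_coeff_ne_zero (mt inv_mul_eq_one.1 (Ne.symm hne))
  have heq (p q : ℕ) : c.coeff a p q = c.coeff b p q :=
    coeff_eq_of_lt_add (d := q + 1) (fun k _ i => congrFun (congrFun hab k) (c, i)) (by omega)
  refine hc ?_
  rw [coeff_mul]
  simp only [heq]
  rw [← coeff_mul, inv_mul_cancel, coeff_one, if_neg (by omega)]

lemma expansion_lt_expansion [LinearOrder (MagnusPattern α × ℕ)]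
    [WellFoundedLT (MagnusPattern α × ℕ)]
    {f : FreeGroup α → FreeGroup α}
    (hf : ∀ (c : MagnusPattern α) (d : ℕ),
      (∀ d' < d, ∀ i, c.coeff a i (i + d') = c.coeff b i (i + d')) →
      ∀ i, c.coeff (f a) i (i + d) - c.coeff (f b) i (i + d) =
        c.coeff a i (i + d) - c.coeff b i (i + d))
    (hab : expansion a < expansion b) : expansion (f a) < expansion (f b) := by
  obtain ⟨d, hd, k, hk, hlt⟩ : ∃ d, (∀ d' < d, expansion a d' = expansion b d') ∧
    ∃ k, (∀ l < k, expansion a d l = expansion b d l) ∧ expansion a d k < expansion b d k := hab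
  have hsub : ∀ d' ≤ d, ∀ l, expansion (f a) d' l - expansion (f b) d' l =
      expansion a d' l - expansion b d' l := fun d' hd' l =>
    hf l.1 d' (fun e he i => congrFun (hd e (by omega)) (l.1, i)) l.2
  refine ⟨d, fun d' hd' => funext fun l => ?_, k, fun l hl => ?_, ?_⟩
  · exact sub_eq_zero.1 ((hsub d' hd'.le l).trans (sub_eq_zero.2 (congrFun (hd d' hd') l)))
  · exact sub_eq_zero.1 ((hsub d le_rfl l).trans (sub_eq_zero.2 (hk l hl)))
  · exact sub_neg.1 ((hsub d le_rfl k).trans_lt (sub_neg.2 hlt))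

theorem exists_biinvariant_linearOrder (α : Type*) : ∃ _ : LinearOrder (FreeGroup α),
    MulLeftStrictMono (FreeGroup α) ∧ MulRightStrictMono (FreeGroup α) := by
  classical
  let _ : LinearOrder (MagnusPattern α × ℕ) := linearOrderOfSTO WellOrderingRel
  have : WellFoundedLT (MagnusPattern α × ℕ) := ⟨IsWellFounded.wf (r := WellOrderingRel)⟩
  exact ⟨LinearOrder.lift' expansion expansion_injective,
    ⟨fun u _ _ => expansion_lt_expansion fun _ _ h => coeff_mul_left_sub h u⟩,
    ⟨fun u _ _ => expansion_lt_expansion fun _ _ h => coeff_mul_right_sub h u⟩⟩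

end MagnusPattern

/-- The square submatrix of size `k` starting at the diagonal place `i`, with entries mapped along
`f`. Restriction to an interval is multiplicative on upper triangular matrices. -/
def diagonalBlock {R S : Type*} [Semiring R] [Semiring S] (f : R →+* S) (i k : ℕ) :
    IncidenceAlgebra R ℕ →* Matrix (Fin k) (Fin k) S where
  toFun a := Matrix.of fun s t => f (a (i + s) (i + t))
  map_one' := by
    ext s t
    simp only [Matrix.of_apply, IncidenceAlgebra.one_apply, Matrix.one_apply, add_right_inj,
      Fin.val_inj]
    split_ifs <;> simp
  map_mul' a b := by
    ext s t
    simp only [Matrix.of_apply, Matrix.mul_apply, IncidenceAlgebra.mul_apply, map_sum, map_mul]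
    rw [Fin.sum_univ_eq_sum_range fun l => f (a (i + s) (i + l)) * f (b (i + l) (i + t)),
      ← Finset.image_add_left_Icc, Finset.sum_image (by simp)]
    refine Finset.sum_subset (fun l hl => ?_) fun l _ hl => ?_
    · simp only [Finset.mem_Icc] at hl
      simp only [Finset.mem_range]
      omega
    · simp only [Finset.mem_Icc, not_and_or] at hl
      rcases hl with hl | hl
      · rw [IncidenceAlgebra.apply_eq_zero_of_not_le (by omega)]; simp
      · rw [IncidenceAlgebra.apply_eq_zero_of_not_le (a := i + l) (by omega)]; simp

lemma orderOf_eq_of_val_eq_one_add {R : Type*} [Ring R] {x : R} (hx : x * x = 0) {u : Rˣ}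
    (hu : (u : R) = 1 + x) : orderOf u = addOrderOf x := by
  have hpow (k : ℕ) : u ^ k = 1 ↔ k • x = 0 := by
    rw [Units.ext_iff, Units.val_one, ← zpow_natCast, val_zpow_of_mul_self_eq_zero hx hu,
      add_eq_left, natCast_zsmul]
  exact Nat.dvd_antisymm (orderOf_dvd_of_pow_eq_one ((hpow _).2 (addOrderOf_nsmul_eq_zero x)))
    (addOrderOf_dvd_of_nsmul_eq_zero ((hpow _).1 (pow_orderOf_eq_one u)))

lemma addOrderOf_intCast_zmod_mul_natAbs (m : ℕ) {a : ℤ} (ha : a ≠ 0) :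
    addOrderOf (a : ZMod (m * a.natAbs)) = m := by
  have hpos := Int.natAbs_pos.2 ha
  have hdvd (k : ℕ) : k • (a : ZMod (m * a.natAbs)) = 0 ↔ m ∣ k := by
    rw [nsmul_eq_mul, ← Int.cast_natCast, ← Int.cast_mul, ZMod.intCast_zmod_eq_zero_iff_dvd,
      ← Int.natAbs_dvd_natAbs, Int.natAbs_mul, Int.natAbs_natCast, Int.natAbs_natCast,
      Nat.mul_dvd_mul_iff_right hpos]
  exact Nat.dvd_antisymm (addOrderOf_dvd_of_nsmul_eq_zero ((hdvd m).2 dvd_rfl))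
    ((hdvd _).1 (addOrderOf_nsmul_eq_zero _))

namespace MagnusPattern

variable {α : Type*}

lemma diagonalBlock_magnusRep {S : Type*} [Ring S] {c : MagnusPattern α} {w : FreeGroup α} {d : ℕ}
    (hd : 0 < d) (hmin : ∀ d', 0 < d' → d' < d → ∀ j, c.coeff w j (j + d') = 0) (i : ℕ) :
    diagonalBlock (Int.castRingHom S) i (d + 1) (c.magnusRep w : IncidenceAlgebra ℤ ℕ) =
      1 + Matrix.single 0 (Fin.last d) (c.coeff w i (i + d) : S) := by
  ext s t
  change ((c.coeff w (i + s) (i + t) : ℤ) : S) = _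
  rw [Matrix.add_apply, Matrix.one_apply, Matrix.single_apply]
  rcases lt_trichotomy s t with hst | rfl | hst
  · rw [if_neg hst.ne, zero_add]
    split_ifs with hcorner
    · obtain ⟨rfl, rfl⟩ := hcorner
      simp
    · rw [Fin.lt_def] at hst
      have hlt : (t : ℕ) - s < d := by
        rw [Fin.ext_iff, Fin.ext_iff, Fin.val_zero, Fin.val_last] at hcorner
        omega
      have h0 := hmin _ (by omega) hlt (i + s)
      rw [show i + (s : ℕ) + (t - s) = i + t by omega] at h0
      rw [h0, Int.cast_zero]
  · rw [coeff_self, if_pos rfl, if_neg, Int.cast_one, add_zero]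
    rintro ⟨rfl, h⟩
    exact hd.ne' (congrArg Fin.val h)
  · rw [coeff_of_lt _ _ (by simpa using hst), if_neg hst.ne', if_neg, Int.cast_zero, add_zero]
    rintro ⟨rfl, rfl⟩
    exact absurd hst (Fin.not_lt_zero _)

/-- At the least distance from the diagonal at which `w` has a nonzero matrix entry, a diagonal
block of its Magnus matrix is `1` plus a single corner entry `x`. Modulo `m * |x|` this block has
order `m`. -/
theorem exists_finite_orderOf_eq {w : FreeGroup α} (hw : w ≠ 1) {m : ℕ} (hm : m ≠ 0) :
    ∃ (H : Type) (_ : Group H) (_ : Finite H) (φ : FreeGroup α →* H), orderOf (φ w) = m := by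
  obtain ⟨d, c, i, hd, hne, hmin⟩ := exists_min_coeff_ne_zero hw
  let q : ℕ := m * (c.coeff w i (i + d)).natAbs
  have : NeZero q := ⟨mul_ne_zero hm (Int.natAbs_ne_zero.2 hne)⟩
  refine ⟨(Matrix (Fin (d + 1)) (Fin (d + 1)) (ZMod q))ˣ, inferInstance, inferInstance,
    (Units.map (diagonalBlock (Int.castRingHom (ZMod q)) i (d + 1))).comp c.magnusRep, ?_⟩
  have hlast : Fin.last d ≠ 0 := fun h => hd.ne' (congrArg Fin.val h)
  have hinj : Function.Injective
      (Matrix.singleAddMonoidHom (α := ZMod q) (0 : Fin (d + 1)) (Fin.last d)) :=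
    fun x y h => by simpa using congrFun (congrFun h 0) (Fin.last d)
  rw [orderOf_eq_of_val_eq_one_add (Matrix.single_mul_single_of_ne _ _ _ _ hlast _)
    (diagonalBlock_magnusRep hd hmin i), ← addOrderOf_intCast_zmod_mul_natAbs m hne]
  exact addOrderOf_injective _ hinj _

end MagnusPattern

/-- A covering, with vertex set `V`, of the rose with petals `α`: every generator permutes the
vertices, and its edges lead from `v` to the image of `v`. -/
abbrev RoseCover (α V : Type*) := α → Equiv.Perm V

namespace RoseCover

variable {α V V' : Type*} (S : RoseCover α V) {S' : RoseCover α V'}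

/-- The endpoint of the walk labelled by a word, as a function of the starting vertex. Words are
read from left to right, so that `walk` reverses products. -/
def walk (w : FreeGroup α) : Equiv.Perm V :=
  (FreeGroup.lift (fun a => MulOpposite.op (S a)) w).unop

@[simp] lemma walk_one : S.walk 1 = 1 := by simp [walk]

lemma walk_mul (u w : FreeGroup α) : S.walk (u * w) = S.walk w * S.walk u := by
  simp [walk]

lemma walk_mul_apply (u w : FreeGroup α) (v : V) :
    S.walk (u * w) v = S.walk w (S.walk u v) := by
  rw [walk_mul]; rfl

@[simp] lemma walk_inv (w : FreeGroup α) : S.walk w⁻¹ = (S.walk w)⁻¹ := by simp [walk]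

@[simp] lemma walk_of (a : α) : S.walk (FreeGroup.of a) = S a := by simp [walk]

variable {S} in
lemma walk_map {f : V → V'} (hf : ∀ a v, f (S a v) = S' a (f v)) (w : FreeGroup α) (v : V) :
    f (S.walk w v) = S'.walk w (f v) := by
  induction w using FreeGroup.induction_on generalizing v with
  | C1 => simp
  | of a => simp [hf]
  | inv_of a _ =>
    rw [walk_inv, walk_inv, walk_of, walk_of, Equiv.Perm.eq_inv_iff_eq, ← hf]
    simp
  | mul u w hu hw => rw [walk_mul_apply, hw, hu, walk_mul_apply]

/-- The fundamental group at `v` of a covering of the rose, as a subgroup of the free group. -/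
def loops (v : V) : Subgroup (FreeGroup α) where
  carrier := {w | S.walk w v = v}
  one_mem' := by simp
  mul_mem' {u w} hu hw := by
    simp only [Set.mem_ofPred_eq] at hu hw ⊢
    rw [walk_mul_apply, hu, hw]
  inv_mem' {u} hu := by
    simp only [Set.mem_ofPred_eq] at hu ⊢
    rw [walk_inv, Equiv.Perm.inv_eq_iff_eq, hu]

variable {S} in
lemma mem_loops {v : V} {w : FreeGroup α} : w ∈ S.loops v ↔ S.walk w v = v := Iff.rfl

lemma conj_mem_loops_iff {v : V} {u w : FreeGroup α} :
    u * w * u⁻¹ ∈ S.loops v ↔ w ∈ S.loops (S.walk u v) := by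
  rw [mem_loops, mem_loops, walk_mul_apply, walk_mul_apply, walk_inv, Equiv.Perm.inv_eq_iff_eq]

section Chains

variable (R : Type*) [CommRing R]

/-- The covering whose vertices are pairs of a vertex and an edge chain, the latter accumulating
the edges passed. -/
noncomputable def chainCover : RoseCover α (V × ((V × α) →₀ R)) := fun a =>
  { toFun p := (S a p.1, p.2 + Finsupp.single (p.1, a) 1)
    invFun p := ((S a)⁻¹ p.1, p.2 - Finsupp.single ((S a)⁻¹ p.1, a) 1)
    left_inv p := by simp
    right_inv p := by simp }

/-- The chain of edges passed by the walk from `v` labelled by `w`, with signs. The edge labelled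
`a` with initial vertex `v` is encoded as `(v, a)`. -/
noncomputable def path (v : V) (w : FreeGroup α) : (V × α) →₀ R :=
  ((S.chainCover R).walk w (v, 0)).2

lemma walk_chainCover (w : FreeGroup α) (v : V) (x : (V × α) →₀ R) :
    (S.chainCover R).walk w (v, x) = (S.walk w v, x + S.path R v w) := by
  refine Prod.ext (walk_map (f := Prod.fst) (fun _ _ => rfl) w (v, x)) ?_
  have := walk_map (S := S.chainCover R) (S' := S.chainCover R) (f := fun p => (p.1, x + p.2))
    (fun a p => by simp [chainCover, add_assoc]) w (v, 0)
  rw [add_zero] at this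
  rw [← this, path]

@[simp] lemma path_one (v : V) : S.path R v 1 = 0 := by simp [path]

lemma path_mul (v : V) (u w : FreeGroup α) :
    S.path R v (u * w) = S.path R v u + S.path R (S.walk u v) w := by
  rw [path, walk_mul_apply, walk_chainCover _ _ u, zero_add, walk_chainCover]

@[simp] lemma path_of (v : V) (a : α) :
    S.path R v (FreeGroup.of a) = Finsupp.single (v, a) 1 := by
  simp [path, chainCover]

lemma path_inv (v : V) (w : FreeGroup α) :
    S.path R v w⁻¹ = -S.path R ((S.walk w)⁻¹ v) w := by
  have := S.path_mul R v w⁻¹ w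
  rw [inv_mul_cancel, path_one, walk_inv] at this
  exact eq_neg_of_add_eq_zero_left this.symm

lemma map_path {A : Type*} [AddCommGroup A] (T : ((V × α) →₀ R) →+ A) {φ : V → FreeGroup α → A}
    (hmul : ∀ v u w, φ v (u * w) = φ v u + φ (S.walk u v) w)
    (hof : ∀ v a, T (Finsupp.single (v, a) 1) = φ v (FreeGroup.of a)) (v : V) (w : FreeGroup α) :
    T (S.path R v w) = φ v w := by
  have hone (v : V) : φ v 1 = 0 := by simpa using hmul v 1 1
  have hinv (v : V) (u : FreeGroup α) : φ v u⁻¹ = -φ ((S.walk u)⁻¹ v) u := by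
    have := hmul v u⁻¹ u
    rw [inv_mul_cancel, hone, walk_inv] at this
    exact eq_neg_of_add_eq_zero_left this.symm
  induction w using FreeGroup.induction_on generalizing v with
  | C1 => simp [hone]
  | of a => simp [hof]
  | inv_of a ih => rw [path_inv, map_neg, ih, hinv]
  | mul u w hu hw => rw [path_mul, map_add, hu, hw, hmul]

variable {S} in
lemma mapDomain_path {f : V → V'} (hf : ∀ a v, f (S a v) = S' a (f v)) (v : V)
    (w : FreeGroup α) :
    Finsupp.mapDomain (Prod.map f id) (S.path R v w) = S'.path R (f v) w := by
  refine S.map_path R (Finsupp.mapDomain.addMonoidHom (Prod.map f id))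
    (φ := fun v w => S'.path R (f v) w) (fun v u w => ?_) (fun v a => ?_) v w
  · rw [path_mul, walk_map hf]
  · simp [Finsupp.mapDomain_single]

/-- The boundary operator from edge chains to vertex chains. -/
noncomputable def edgeBoundary : ((V × α) →₀ R) →ₗ[R] (V →₀ R) :=
  Finsupp.linearCombination R
    (fun e => Finsupp.single (S e.2 e.1) (1 : R) - Finsupp.single e.1 1)

lemma edgeBoundary_path (v : V) (w : FreeGroup α) :
    S.edgeBoundary R (S.path R v w) =
      Finsupp.single (S.walk w v) 1 - Finsupp.single v 1 := by
  refine S.map_path R (S.edgeBoundary R).toAddMonoidHom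
    (φ := fun v w => Finsupp.single (S.walk w v) 1 - Finsupp.single v 1)
    (fun v u w => ?_) (fun v a => ?_) v w
  · rw [walk_mul_apply]; abel
  · simp [edgeBoundary]

variable {S} {v : V} {w : FreeGroup α}

lemma path_mul_of_mem_loops {u : FreeGroup α} (hu : u ∈ S.loops v) (w : FreeGroup α) :
    S.path R v (u * w) = S.path R v u + S.path R v w := by
  rw [path_mul, mem_loops.1 hu]

lemma edgeBoundary_path_of_mem_loops (hw : w ∈ S.loops v) :
    S.edgeBoundary R (S.path R v w) = 0 := by
  rw [edgeBoundary_path, mem_loops.1 hw, sub_self]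

variable (S v) in
/-- The homomorphism taking a closed walk at `v` to its chain of edges. -/
noncomputable def loopChain : S.loops v →* Multiplicative ((V × α) →₀ R) where
  toFun w := Multiplicative.ofAdd (S.path R v w)
  map_one' := by simp
  map_mul' u w := by
    rw [← ofAdd_add, Subgroup.coe_mul, path_mul_of_mem_loops R u.2]

lemma path_zpow (hw : w ∈ S.loops v) (k : ℤ) : S.path R v (w ^ k) = k • S.path R v w := by
  have h := map_zpow (S.loopChain R v) ⟨w, hw⟩ k
  exact congrArg Multiplicative.toAdd h

lemma path_eq_zero_of_mem_commutator (hw : w ∈ ⁅S.loops v, S.loops v⁆) : S.path R v w = 0 := by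
  rw [← Subgroup.map_subtype_commutator] at hw
  obtain ⟨x, hx, rfl⟩ := hw
  exact Abelianization.commutator_subset_ker (S.loopChain R v) hx

lemma path_conj {u : FreeGroup α} (h : w ∈ S.loops (S.walk u v)) :
    S.path R v (u * w * u⁻¹) = S.path R (S.walk u v) w := by
  rw [path_mul, path_mul, walk_mul_apply, mem_loops.1 h, path_inv]
  simp

lemma path_prod_conj_zpow {ι : Type*} (c : FreeGroup α) (u : ι → FreeGroup α) (x : ι → ℤ)
    (l : List ι) (h : ∀ i ∈ l, c ∈ S.loops (S.walk (u i) v)) :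
    S.path R v (l.map fun i => (u i * c * (u i)⁻¹) ^ x i).prod =
      (l.map fun i => x i • S.path R (S.walk (u i) v) c).sum := by
  induction l with
  | nil => simp
  | cons i l ih =>
    rw [List.forall_mem_cons] at h
    have hi := S.conj_mem_loops_iff.2 h.1
    rw [List.map_cons, List.prod_cons, List.map_cons, List.sum_cons,
      path_mul_of_mem_loops R (zpow_mem hi _), path_zpow R hi, path_conj R h.1, ih h.2]

end Chains

section SpanningTree

variable {S} {b : V} {τ : V → FreeGroup α}

variable (S τ) in
/-- The closed walk which follows `τ v` from the base point to `v`, then `u`, and returns to the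
base point along the walk chosen by `τ`. -/
def treeLoop (v : V) (u : FreeGroup α) : FreeGroup α := τ v * u * (τ (S.walk u v))⁻¹

lemma treeLoop_mem_loops (hτ : ∀ v, S.walk (τ v) b = v) (v : V) (u : FreeGroup α) :
    S.treeLoop τ v u ∈ S.loops b := by
  rw [treeLoop, mem_loops, walk_mul_apply, walk_mul_apply, hτ, walk_inv,
    Equiv.Perm.inv_eq_iff_eq, hτ]

lemma treeLoop_mul (v : V) (u w : FreeGroup α) :
    S.treeLoop τ v (u * w) = S.treeLoop τ v u * S.treeLoop τ (S.walk u v) w := by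
  simp only [treeLoop, walk_mul_apply]
  group

lemma path_treeLoop (R : Type*) [CommRing R] (hτ : ∀ v, S.walk (τ v) b = v) (v : V)
    (u : FreeGroup α) :
    S.path R b (S.treeLoop τ v u) =
      S.path R b (τ v) + S.path R v u - S.path R b (τ (S.walk u v)) := by
  rw [treeLoop, path_mul, path_mul, path_inv, walk_mul_apply, hτ,
    show (S.walk (τ (S.walk u v)))⁻¹ (S.walk u v) = b by rw [Equiv.Perm.inv_eq_iff_eq, hτ]]
  exact (sub_eq_add_neg _ _).symm

theorem mem_span_path_loops {R : Type*} [CommRing R] (hb : ∀ v, ∃ w, S.walk w b = v)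
    {z : (V × α) →₀ R} (hz : S.edgeBoundary R z = 0) :
    z ∈ Submodule.span R (S.path R b '' (S.loops b : Set (FreeGroup α))) := by
  choose τ hτ using hb
  let Q : (V →₀ R) →ₗ[R] ((V × α) →₀ R) :=
    Finsupp.linearCombination R (fun v => S.path R b (τ v))
  let Θ : ((V × α) →₀ R) →ₗ[R] ((V × α) →₀ R) :=
    Finsupp.linearCombination R (fun e => S.path R b (S.treeLoop τ e.1 (FreeGroup.of e.2)))
  have hΘ : Θ = LinearMap.id - Q ∘ₗ S.edgeBoundary R := by
    refine Finsupp.lhom_ext' fun e => LinearMap.ext_ring ?_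
    simp only [Θ, Q, edgeBoundary, LinearMap.comp_apply, Finsupp.lsingle_apply,
      Finsupp.linearCombination_single, one_smul, LinearMap.sub_apply, LinearMap.id_apply,
      map_sub, path_treeLoop R hτ, path_of, walk_of]
    abel
  have hzΘ : z = Θ z := by rw [hΘ]; simp [hz]
  rw [hzΘ, Finsupp.linearCombination_apply]
  exact Submodule.sum_mem _ fun e _ => Submodule.smul_mem _ _
    (Submodule.subset_span ⟨_, treeLoop_mem_loops hτ e.1 (FreeGroup.of e.2), rfl⟩)

theorem mem_span_path_of_loops_eq_closure {R : Type*} [CommRing R]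
    (hb : ∀ v, ∃ w, S.walk w b = v) {c : FreeGroup α} {T : Set (FreeGroup α)}
    (hT : S.loops b = Subgroup.closure ((fun u => u * c * u⁻¹) '' T)) {z : (V × α) →₀ R}
    (hz : S.edgeBoundary R z = 0) :
    z ∈ Submodule.span R ((fun u => S.path R (S.walk u b) c) '' T) := by
  refine Submodule.span_le.2 ?_ (mem_span_path_loops hb hz)
  rintro _ ⟨w, hw, rfl⟩
  rw [SetLike.mem_coe, hT] at hw
  rw [SetLike.mem_coe]
  induction hw using Subgroup.closure_induction with
  | mem x hx =>
    obtain ⟨u, hu, rfl⟩ := hx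
    have hloop : u * c * u⁻¹ ∈ S.loops b := hT ▸ Subgroup.subset_closure ⟨u, hu, rfl⟩
    rw [path_conj R (S.conj_mem_loops_iff.1 hloop)]
    exact Submodule.subset_span ⟨u, hu, rfl⟩
  | one => simp
  | mul x y hx hy ihx ihy =>
    rw [path_mul_of_mem_loops R (hT ▸ hx)]
    exact add_mem ihx ihy
  | inv x hx ih =>
    have hloop : x⁻¹ ∈ S.loops b := inv_mem (hT ▸ hx)
    rw [mem_loops, walk_inv] at hloop
    rw [path_inv, hloop]
    exact neg_mem ih

/-- The first homology of a covering of the rose is the abelianisation of its fundamental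
group. -/
theorem mem_commutator_of_path_eq_zero (hb : ∀ v, ∃ w, S.walk w b = v) {w : FreeGroup α}
    (hw : w ∈ S.loops b) (h0 : S.path ℤ b w = 0) : w ∈ ⁅S.loops b, S.loops b⁆ := by
  choose τ hτ using hb
  let φ (v : V) (u : FreeGroup α) : Additive (Abelianization (S.loops b)) :=
    .ofMul (.of ⟨S.treeLoop τ v u, treeLoop_mem_loops hτ v u⟩)
  let T : ((V × α) →₀ ℤ) →+ Additive (Abelianization (S.loops b)) :=
    (Finsupp.linearCombination ℤ (fun e : V × α => φ e.1 (FreeGroup.of e.2))).toAddMonoidHom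
  have hTφ : T (S.path ℤ b w) = φ b w := by
    refine S.map_path ℤ T (fun v u w => ?_) (fun v a => by simp [T]) b w
    simp only [φ, treeLoop_mul, ← ofMul_mul, ← map_mul]
    rfl
  let t : S.loops b := ⟨τ b, hτ b⟩
  have htree : (⟨S.treeLoop τ b w, treeLoop_mem_loops hτ b w⟩ : S.loops b) =
      t * ⟨w, hw⟩ * t⁻¹ := by
    simp [Subtype.ext_iff, treeLoop, mem_loops.1 hw, t]
  have hφ : Abelianization.of (t * ⟨w, hw⟩ * t⁻¹) = 1 := by
    rw [h0, map_zero] at hTφ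
    rw [← htree]
    exact hTφ.symm
  rw [map_mul, map_mul, map_inv, mul_comm, inv_mul_cancel_left] at hφ
  rw [← Subgroup.map_subtype_commutator]
  exact ⟨⟨w, hw⟩, (QuotientGroup.eq_one_iff _).1 hφ, rfl⟩

end SpanningTree

section Cayley

variable {G : Type*} [Group G]

/-- The Cayley graph of a quotient of a free group. -/
def cayley (π : FreeGroup α →* G) : RoseCover α G := fun a => Equiv.mulRight (π (FreeGroup.of a))

lemma walk_cayley (π : FreeGroup α →* G) (w : FreeGroup α) (g : G) :
    (cayley π).walk w g = g * π w := by
  induction w using FreeGroup.induction_on generalizing g with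
  | C1 => simp
  | of a => simp [cayley]
  | inv_of a _ => simp [cayley]
  | mul u w hu hw => rw [walk_mul_apply, hu, hw, map_mul, mul_assoc]

lemma loops_cayley (π : FreeGroup α →* G) (g : G) : (cayley π).loops g = π.ker := by
  ext w
  rw [mem_loops, walk_cayley, mul_eq_left, MonoidHom.mem_ker]

lemma exists_walk_cayley_eq {π : FreeGroup α →* G} (hπ : Function.Surjective π) (g : G) :
    ∃ w, (cayley π).walk w 1 = g := by
  obtain ⟨w, rfl⟩ := hπ g
  exact ⟨w, by rw [walk_cayley, one_mul]⟩

end Cayley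

section Schreier

/-- The Schreier graph of a subgroup of a free group, with the coset space as vertex set. -/
def schreier (M : Subgroup (FreeGroup α)) : RoseCover α (FreeGroup α ⧸ M) := fun a =>
  MulAction.toPerm (FreeGroup.of a)⁻¹

variable (M : Subgroup (FreeGroup α))

lemma walk_schreier (w : FreeGroup α) (v : FreeGroup α ⧸ M) : (schreier M).walk w v = w⁻¹ • v := by
  induction w using FreeGroup.induction_on generalizing v with
  | C1 => simp
  | of a => simp [schreier]
  | inv_of a _ => rw [walk_inv, walk_of, Equiv.Perm.inv_eq_iff_eq]; simp [schreier]
  | mul u w hu hw => rw [walk_mul_apply, hu, hw, mul_inv_rev, mul_smul]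

lemma walk_schreier_one (w : FreeGroup α) :
    (schreier M).walk w ((1 : FreeGroup α) : FreeGroup α ⧸ M) = (w⁻¹ : FreeGroup α) := by
  rw [walk_schreier, MulAction.Quotient.smul_coe, smul_eq_mul, mul_one]

lemma loops_schreier : (schreier M).loops ((1 : FreeGroup α) : FreeGroup α ⧸ M) = M := by
  ext v
  rw [mem_loops, walk_schreier_one, QuotientGroup.eq, inv_inv, mul_one]

lemma exists_walk_schreier_eq (v : FreeGroup α ⧸ M) :
    ∃ w, (schreier M).walk w ((1 : FreeGroup α) : FreeGroup α ⧸ M) = v := by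
  obtain ⟨v, rfl⟩ := QuotientGroup.mk_surjective v
  exact ⟨v⁻¹, by rw [walk_schreier_one, inv_inv]⟩

end Schreier

end RoseCover

/-- A cyclic word of length `L` in the letters `a` (encoded as `(a, true)`) and `a⁻¹` (encoded as
`(a, false)`), with positions in `ZMod L`. Position `j` is the place before the letter `j`. -/
abbrev CyclicWord (α : Type*) (L : ℕ) := ZMod L → α × Bool

namespace CyclicWord

variable {α : Type*} {L : ℕ} (y : CyclicWord α L)

/-- The element of the free group spelled by the `t` letters following position `j`. -/
def segment (j : ZMod L) (t : ℕ) : FreeGroup α :=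
  FreeGroup.mk ((List.range t).map fun s : ℕ => y (j + s))

@[simp] lemma segment_zero (j : ZMod L) : y.segment j 0 = 1 := rfl

lemma segment_succ (j : ZMod L) (t : ℕ) :
    y.segment j (t + 1) = y.segment j t * FreeGroup.mk [y (j + t)] := by
  simp [segment, List.range_succ]

lemma segment_add (j : ZMod L) (s t : ℕ) :
    y.segment j (s + t) = y.segment j s * y.segment (j + s) t := by
  induction t with
  | zero => simp
  | succ t ih => rw [← add_assoc, segment_succ, ih, segment_succ, mul_assoc]; simp [add_assoc]

lemma segment_add_one_length (j : ZMod L) :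
    y.segment (j + 1) L = (FreeGroup.mk [y j])⁻¹ * y.segment j L * FreeGroup.mk [y j] := by
  have hone : y.segment j 1 = FreeGroup.mk [y j] := by simp [segment]
  have hadd := y.segment_add j 1 L
  rw [hone, Nat.cast_one, add_comm, segment_succ, ZMod.natCast_self, add_zero] at hadd
  rw [mul_assoc, hadd, inv_mul_cancel_left]

variable {y}

lemma segment_add_of_periodic {g : ZMod L} (h : Function.Periodic y g) (j : ZMod L) (t : ℕ) :
    y.segment (j + g) t = y.segment j t := by
  simp only [segment, add_right_comm j g, h _]

lemma segment_mul_of_periodic {g : ℕ} (h : Function.Periodic y (g : ZMod L)) (j : ZMod L)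
    (k : ℕ) : y.segment j (g * k) = y.segment j g ^ k := by
  induction k with
  | zero => simp
  | succ k ih =>
    rw [mul_add_one, segment_add, ih, pow_succ, Nat.cast_mul, mul_comm (g : ZMod L),
      segment_add_of_periodic (h.nat_mul k)]

variable (y) in
lemma segment_length_mul (j : ZMod L) (k : ℕ) : y.segment j (L * k) = y.segment j L ^ k :=
  segment_mul_of_periodic (fun i => by simp) j k

lemma exists_segment_eq_pow_of_periodic [NeZero L] {e : ZMod L} (he : e ≠ 0)
    (hper : Function.Periodic y e) (j : ZMod L) :
    ∃ (s : FreeGroup α) (k : ℕ), 2 ≤ k ∧ y.segment j L = s ^ k := by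
  let g := Nat.gcd e.val L
  have hg : Function.Periodic y (g : ZMod L) := by
    have hbezout := congrArg (Int.cast : ℤ → ZMod L) (Nat.gcd_eq_gcd_ab e.val L)
    push_cast at hbezout
    rw [ZMod.natCast_zmod_val, ZMod.natCast_self, zero_mul, add_zero, mul_comm] at hbezout
    rw [hbezout]
    exact hper.int_mul _
  obtain ⟨k, hk⟩ : g ∣ L := Nat.gcd_dvd_right _ _
  have hlt : g < L := (Nat.gcd_le_left L (ZMod.val_pos.2 he)).trans_lt (ZMod.val_lt e)
  have hk2 : 2 ≤ k := by
    by_contra hk2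
    have : k ≤ 1 := by omega
    interval_cases k <;> omega
  exact ⟨y.segment j g, k, hk2, (congrArg _ hk).trans (segment_mul_of_periodic hg j k)⟩

variable (y) in
/-- The position from which the edge carrying the letter `j` starts when it is traversed in its
positive direction. -/
def tail (j : ZMod L) : ZMod L := bif (y j).2 then j else j + 1

variable (y) in
/-- The position at which the edge carrying the letter `j` ends when it is traversed in its
positive direction. -/
def head (j : ZMod L) : ZMod L := bif (y j).2 then j + 1 else j

lemma segment_head_length (j : ZMod L) :
    y.segment (y.head j) L =
      (FreeGroup.of (y j).1)⁻¹ * y.segment (y.tail j) L * FreeGroup.of (y j).1 := by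
  have h := y.segment_add_one_length j
  rw [head, tail]
  rcases hj : y j with ⟨a, b⟩
  rw [hj] at h
  cases b
  · rw [show FreeGroup.mk [(a, false)] = (FreeGroup.of a)⁻¹ from rfl] at h
    simp only [cond_false, h]
    group
  · exact h

variable (y) in
/-- No letter is followed, cyclically, by its inverse. -/
def IsReduced : Prop := ∀ i, (y i).1 = (y (i + 1)).1 → (y i).2 = (y (i + 1)).2

namespace IsReduced

variable (hy : y.IsReduced)
include hy

lemma letter_eq_of_segment_eq {j k : ZMod L} {t : ℕ} (h : y.segment j t = y.segment k t) {s : ℕ}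
    (hs : s < t) : y (j + s) = y (k + s) := by
  classical
  have hred (j : ZMod L) : FreeGroup.IsReduced ((List.range t).map fun s : ℕ => y (j + s)) := by
    refine List.isChain_iff_getElem.2 fun i hi => ?_
    simpa [add_assoc] using hy (j + i)
  have hword := congrArg FreeGroup.toWord h
  rw [segment, segment, FreeGroup.toWord_mk, FreeGroup.toWord_mk, (hred j).reduce_eq,
    (hred k).reduce_eq] at hword
  exact List.map_inj_left.1 hword s (by simpa using hs)

lemma segment_length_injective [NeZero L] {j₀ : ZMod L}
    (hprim : ¬∃ (s : FreeGroup α) (k : ℕ), 2 ≤ k ∧ y.segment j₀ L = s ^ k) :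
    Function.Injective fun j => y.segment j L := by
  intro j k hjk
  by_contra hne
  refine hprim (exists_segment_eq_pow_of_periodic (sub_ne_zero.2 (Ne.symm hne)) (fun i => ?_) j₀)
  have hletter := hy.letter_eq_of_segment_eq hjk (ZMod.val_lt (i - j))
  rw [ZMod.natCast_zmod_val, add_sub_cancel] at hletter
  rw [hletter]
  congr 1
  ring

lemma eq_of_tail_eq {j k : ZMod L} (hletter : (y j).1 = (y k).1) (htail : y.tail j = y.tail k) :
    j = k := by
  cases hj : (y j).2 <;> cases hk : (y k).2 <;>
    simp only [tail, hj, hk, cond_false, cond_true] at htail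
  · exact add_right_cancel htail
  · subst htail
    rw [hy j hletter, hk] at hj
    exact absurd hj (by simp)
  · subst htail
    rw [hy k hletter.symm, hj] at hk
    exact absurd hk (by simp)
  · exact htail

end IsReduced

section OfList

variable (w : List (α × Bool)) [NeZero w.length]

/-- The cyclic word obtained by joining the ends of a nonempty list of letters. -/
def ofList : CyclicWord α w.length := fun i => w[i.val]'(ZMod.val_lt i)

variable {w}

lemma ofList_natCast {s : ℕ} (hs : s < w.length) : ofList w s = w[s] := by
  simp only [ofList, ZMod.val_cast_of_lt hs]

lemma segment_ofList : (ofList w).segment 0 w.length = FreeGroup.mk w := by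
  refine congrArg FreeGroup.mk (List.ext_getElem (by simp) fun s _ hs => ?_)
  simp [ofList_natCast hs]

lemma isReduced_ofList (hw : FreeGroup.IsCyclicallyReduced w) : (ofList w).IsReduced := by
  intro i
  obtain ⟨s, hs, rfl⟩ : ∃ s : ℕ, s < w.length ∧ (s : ZMod w.length) = i :=
    ⟨i.val, ZMod.val_lt i, ZMod.natCast_zmod_val i⟩
  by_cases hs' : s + 1 < w.length
  · rw [← Nat.cast_add_one, ofList_natCast hs, ofList_natCast hs']
    exact List.isChain_iff_getElem.1 hw.1 s hs'
  · have hlast : s + 1 = w.length := by omega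
    have hzero : (s : ZMod w.length) + 1 = (0 : ℕ) := by
      rw [← Nat.cast_add_one, hlast]; simp
    rw [hzero, ofList_natCast hs, ofList_natCast (by omega : 0 < w.length)]
    refine hw.2 _ ?_ _ ?_
    · rw [List.getLast?_eq_getElem?, ← hlast]; simp
    · rw [List.head?_eq_getElem?]; simp

end OfList

theorem exists_isReduced_conj_segment {r : FreeGroup α} (hr : r ≠ 1) :
    ∃ (L : ℕ) (_ : NeZero L) (y : CyclicWord α L) (g : FreeGroup α),
      y.IsReduced ∧ r = g * y.segment 0 L * g⁻¹ := by
  classical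
  let w := FreeGroup.reduceCyclically r.toWord
  let g := FreeGroup.mk (FreeGroup.reduceCyclically.conjugator r.toWord)
  have hconj : r = g * FreeGroup.mk w * g⁻¹ := by
    rw [FreeGroup.inv_mk, FreeGroup.mul_mk, FreeGroup.mul_mk,
      FreeGroup.reduceCyclically.conj_conjugator_reduceCyclically, FreeGroup.mk_toWord]
  have hw : w ≠ [] := by
    intro h
    rw [h, ← FreeGroup.one_eq_mk, mul_one, mul_inv_cancel] at hconj
    exact hr hconj
  have : NeZero w.length := ⟨by simpa using hw⟩
  exact ⟨w.length, this, ofList w, g,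
    isReduced_ofList (FreeGroup.reduceCyclically.isCyclicallyReduced FreeGroup.isReduced_toWord),
    by rw [segment_ofList]; exact hconj⟩

end CyclicWord

/-- A reduced cyclic word together with a linear ranking of its positions for which the passages
of the word through an edge do not cross: their tails are ranked in the same order as their
heads. -/
structure StackedWord (α : Type*) (L : ℕ) (Λ : Type*) [LinearOrder Λ] where
  letter : CyclicWord α L
  isReduced : letter.IsReduced
  rank : ZMod L → Λ
  rank_injective : Function.Injective rank
  noncrossing : ∀ j k, (letter j).1 = (letter k).1 →
    (rank (letter.tail j) ≤ rank (letter.tail k) ↔ rank (letter.head j) ≤ rank (letter.head k))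

namespace StackedWord

variable {α Λ : Type*} [LinearOrder Λ] {L : ℕ}

/-- A stacked word, with the reversed ranking of its positions. -/
def dual (W : StackedWord α L Λ) : StackedWord α L Λᵒᵈ where
  letter := W.letter
  isReduced := W.isReduced
  rank j := OrderDual.toDual (W.rank j)
  rank_injective _ _ h := W.rank_injective h
  noncrossing j k h := W.noncrossing k j h.symm

variable [NeZero L]

/-- The stacking of a reduced cyclic word which is not a proper power: a position is ranked by the
element of the bi-ordered free group which the word spells from there. Passing along an edge
conjugates these elements by a generator, which preserves their order. -/
def ofIsReduced [LinearOrder (FreeGroup α)] [MulLeftStrictMono (FreeGroup α)]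
    [MulRightStrictMono (FreeGroup α)] {y : CyclicWord α L} (hy : y.IsReduced)
    (hprim : ¬∃ (s : FreeGroup α) (k : ℕ), 2 ≤ k ∧ y.segment 0 L = s ^ k) :
    StackedWord α L (FreeGroup α) where
  letter := y
  isReduced := hy
  rank j := y.segment j L
  rank_injective := hy.segment_length_injective hprim
  noncrossing j k h := by
    have hconj (a : FreeGroup α) : StrictMono fun x : FreeGroup α => a⁻¹ * x * a :=
      fun _ _ h => mul_lt_mul_left (mul_lt_mul_right h _) _
    rw [y.segment_head_length, y.segment_head_length, ← h]
    exact (hconj _).le_iff_le.symm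

theorem exists_conj_segment {r : FreeGroup α}
    (hr : ¬∃ (s : FreeGroup α) (k : ℕ), 2 ≤ k ∧ r = s ^ k) :
    ∃ (L : ℕ) (_ : NeZero L) (_ : LinearOrder (FreeGroup α))
      (W : StackedWord α L (FreeGroup α)) (g : FreeGroup α),
      r = g * W.letter.segment 0 L * g⁻¹ := by
  obtain ⟨L, hL, y, g, hy, hconj⟩ := CyclicWord.exists_isReduced_conj_segment
    (r := r) (fun h => hr ⟨1, 2, le_rfl, by simpa using h⟩)
  obtain ⟨ord, hleft, hright⟩ := MagnusPattern.exists_biinvariant_linearOrder α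
  refine ⟨L, hL, ord, ofIsReduced hy ?_, g, hconj⟩
  rintro ⟨s, k, hk, h⟩
  exact hr ⟨g * s * g⁻¹, k, hk, by rw [conj_pow, ← h, hconj]⟩

end StackedWord

section FiberMax

variable {X Y Λ : Type*} [LinearOrder Λ]

/-- Among the elements of `O` with the same image as `x` under `f`, none is ranked higher by `ρ`
than `x`. -/
def IsFiberMax (f : X → Y) (ρ : X → Λ) (O : Finset X) (x : X) : Prop :=
  ∀ x' ∈ O, f x' = f x → ρ x' ≤ ρ x

lemma card_filter_isFiberMax [DecidableEq Y] {f : X → Y} {ρ : X → Λ}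
    (hinj : ∀ x x', f x = f x' → ρ x = ρ x' → x = x') (O : Finset X)
    [DecidablePred (IsFiberMax f ρ O)] :
    (O.filter (IsFiberMax f ρ O)).card = (O.image f).card := by
  refine Finset.card_nbij f (fun x hx => ?_) (fun x hx x' hx' h => ?_) fun y hy => ?_
  · exact Finset.mem_image_of_mem f (Finset.mem_filter.1 hx).1
  · rw [Finset.mem_coe, Finset.mem_filter] at hx hx'
    exact hinj x x' h (le_antisymm (hx'.2 x hx.1 h) (hx.2 x' hx'.1 h.symm))
  · obtain ⟨x, hx, rfl⟩ := Finset.mem_image.1 hy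
    obtain ⟨x', hx', hmax⟩ := (O.filter fun p => f p = f x).exists_max_image ρ ⟨x, by simp [hx]⟩
    rw [Finset.mem_filter] at hx'
    refine ⟨x', Finset.mem_filter.2 ⟨hx'.1, fun p hp hpx => hmax p ?_⟩, hx'.2⟩
    exact Finset.mem_filter.2 ⟨hp, hpx.trans hx'.2⟩

end FiberMax

lemma apply_eq_of_sameCycle {X Y : Type*} {σ : Equiv.Perm X} {f : X → Y}
    (h : ∀ x, f (σ x) = f x) {x y : X} (hxy : σ.SameCycle x y) : f y = f x := by
  obtain ⟨i, rfl⟩ := hxy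
  induction i with
  | zero => rfl
  | succ i ih => rw [add_comm, zpow_one_add, Equiv.Perm.mul_apply, h, ih]
  | pred i ih => rw [← ih, ← h, ← Equiv.Perm.mul_apply, ← zpow_one_add, add_sub_cancel]

section FiniteDimensional

variable {K M N : Type*} [Field K] [AddCommGroup M] [Module K M] [AddCommGroup N] [Module K N]

lemma finrank_map_add_finrank_inf_ker (f : M →ₗ[K] N) (p : Submodule K M)
    [FiniteDimensional K p] :
    Module.finrank K (p.map f) + Module.finrank K (p ⊓ LinearMap.ker f : Submodule K M) =
      Module.finrank K p := by
  rw [← LinearMap.finrank_range_add_finrank_ker (f.domRestrict p), LinearMap.range_domRestrict,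
    ← Submodule.map_comap_subtype, Submodule.finrank_map_subtype_eq]
  rfl

lemma finiteDimensional_supported {X : Type*} (O : Finset X) :
    FiniteDimensional K (Finsupp.supported K K (O : Set X)) :=
  .of_surjective _ (Finsupp.supportedEquivFinsupp (R := K) (M := K) (O : Set X)).symm.surjective

lemma finrank_supported {X : Type*} (O : Finset X) :
    Module.finrank K (Finsupp.supported K K (O : Set X)) = O.card := by
  rw [(Finsupp.supportedEquivFinsupp (O : Set X)).finrank_eq, Module.finrank_finsupp_self]
  simp

end FiniteDimensional

namespace RoseCover

variable (K : Type*) [Field K] {α V : Type*} (S : RoseCover α V)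

/-- The cycles supported on a set of edges. -/
noncomputable def cyclesOn (E : Set (V × α)) : Submodule K ((V × α) →₀ K) :=
  Finsupp.supported K K E ⊓ LinearMap.ker (S.edgeBoundary K)

lemma card_le_card_add_finrank_cyclesOn {E : Finset (V × α)} {U : Finset V}
    (hU : ∀ e ∈ E, e.1 ∈ U ∧ S e.2 e.1 ∈ U) :
    E.card ≤ U.card + Module.finrank K (S.cyclesOn K E) := by
  have hmap : (Finsupp.supported K K (E : Set (V × α))).map (S.edgeBoundary K) ≤
      Finsupp.supported K K (U : Set V) := by
    rw [Finsupp.supported_eq_span_single, Submodule.map_span, Submodule.span_le]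
    rintro _ ⟨_, ⟨e, he, rfl⟩, rfl⟩
    have := hU e he
    simpa [edgeBoundary] using sub_mem (Finsupp.single_mem_supported K (1 : K) this.2)
      (Finsupp.single_mem_supported K (1 : K) this.1)
  have := finiteDimensional_supported (K := K) E
  have := finiteDimensional_supported (K := K) U
  have hrank := finrank_map_add_finrank_inf_ker (S.edgeBoundary K)
    (Finsupp.supported K K (E : Set (V × α)))
  have hle := Submodule.finrank_mono hmap
  rw [finrank_supported] at hrank hle
  rw [cyclesOn]
  omega

lemma path_mk_singleton (v : V) (a : α) (b : Bool) :
    S.path K v (FreeGroup.mk [(a, b)]) =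
      Finsupp.single (bif b then v else S.walk (FreeGroup.mk [(a, b)]) v, a)
        (bif b then (1 : K) else -1) := by
  cases b
  · rw [show FreeGroup.mk [(a, false)] = (FreeGroup.of a)⁻¹ from rfl, path_inv]
    simp
  · exact S.path_of K v a

end RoseCover

namespace StackedWord

variable {α Λ V : Type*} [LinearOrder Λ] {L : ℕ} (W : StackedWord α L Λ) (S : RoseCover α V)

/-- Reading the next letter of the word in a covering of the rose. The passage of the word through
the vertex `v` at the position `j` is encoded as `(v, j)`; the cycles of this permutation are the
lifts of the word. -/
def next : Equiv.Perm (V × ZMod L) where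
  toFun o := (S.walk (FreeGroup.mk [W.letter o.2]) o.1, o.2 + 1)
  invFun o := ((S.walk (FreeGroup.mk [W.letter (o.2 - 1)]))⁻¹ o.1, o.2 - 1)
  left_inv o := by simp
  right_inv o := by simp

lemma next_apply (o : V × ZMod L) :
    W.next S o = (S.walk (FreeGroup.mk [W.letter o.2]) o.1, o.2 + 1) := rfl

lemma next_pow_apply (v : V) (j : ZMod L) (t : ℕ) :
    (W.next S ^ t) (v, j) = (S.walk (W.letter.segment j t) v, j + t) := by
  induction t with
  | zero => simp
  | succ t ih =>
    rw [pow_succ', Equiv.Perm.mul_apply, ih, next_apply, CyclicWord.segment_succ,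
      S.walk_mul_apply, Nat.cast_add_one, add_assoc]

/-- The passage through the initial vertex of the edge read after the passage `o`, when the edge is
traversed in its positive direction. -/
def source (o : V × ZMod L) : V × ZMod L := bif (W.letter o.2).2 then o else W.next S o

/-- The passage through the terminal vertex of the edge read after the passage `o`, when the edge
is traversed in its positive direction. -/
def target (o : V × ZMod L) : V × ZMod L := bif (W.letter o.2).2 then W.next S o else o

/-- The edge read after the passage `o`. -/
def edge (o : V × ZMod L) : V × α := ((W.source S o).1, (W.letter o.2).1)

lemma source_snd (o : V × ZMod L) : (W.source S o).2 = W.letter.tail o.2 := by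
  rw [source, CyclicWord.tail]; cases (W.letter o.2).2 <;> rfl

lemma target_snd (o : V × ZMod L) : (W.target S o).2 = W.letter.head o.2 := by
  rw [target, CyclicWord.head]; cases (W.letter o.2).2 <;> rfl

lemma target_fst (o : V × ZMod L) :
    (W.target S o).1 = S (W.edge S o).2 (W.edge S o).1 := by
  rw [target, edge, source, next_apply]
  rcases W.letter o.2 with ⟨a, b⟩
  cases b
  · rw [show FreeGroup.mk [(a, false)] = (FreeGroup.of a)⁻¹ from rfl]
    simp
  · exact congrArg (fun σ : Equiv.Perm V => σ o.1) (S.walk_of a)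

variable {W S} {o o' : V × ZMod L}

lemma source_fst_eq (h : W.edge S o = W.edge S o') : (W.source S o).1 = (W.source S o').1 :=
  congrArg (fun e : V × α => e.1) h

lemma target_fst_eq (h : W.edge S o = W.edge S o') : (W.target S o).1 = (W.target S o').1 := by
  rw [target_fst, target_fst, h]

lemma eq_of_edge_eq (h : W.edge S o = W.edge S o')
    (hrank : W.rank (W.source S o).2 = W.rank (W.source S o').2) : o = o' := by
  have htail : (W.source S o).2 = (W.source S o').2 := W.rank_injective hrank
  have hpos : o.2 = o'.2 := by
    rw [source_snd, source_snd] at htail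
    exact W.isReduced.eq_of_tail_eq (congrArg Prod.snd h) htail
  have hsource : W.source S o = W.source S o' := Prod.ext (source_fst_eq h) htail
  have htarget : W.target S o = W.target S o' :=
    Prod.ext (target_fst_eq h) (by rw [target_snd, target_snd, hpos])
  rw [source, source, hpos] at hsource
  rw [target, target, hpos] at htarget
  cases hb : (W.letter o'.2).2
  · simpa [hb] using htarget
  · simpa [hb] using hsource

lemma rank_target_le_iff (h : W.edge S o = W.edge S o') :
    W.rank (W.source S o).2 ≤ W.rank (W.source S o').2 ↔
      W.rank (W.target S o).2 ≤ W.rank (W.target S o').2 := by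
  rw [source_snd, source_snd, target_snd, target_snd]
  exact W.noncrossing _ _ (congrArg Prod.snd h)

variable (W) in
/-- No passage of `O` runs through the same vertex as `o` on a higher level. -/
def VertexTop (O : Finset (V × ZMod L)) : V × ZMod L → Prop :=
  IsFiberMax Prod.fst (fun p => W.rank p.2) O

variable (W S) in
/-- No passage of `O` runs through the same edge as `o` on a higher level. -/
def EdgeTop (O : Finset (V × ZMod L)) : V × ZMod L → Prop :=
  IsFiberMax (W.edge S) (fun p => W.rank (W.source S p).2) O

variable (W S) in
/-- A set of passages is a union of lifts of the word. -/
def IsUnionOfLifts (O : Finset (V × ZMod L)) : Prop := ∀ o, W.next S o ∈ O ↔ o ∈ O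

variable (W S) in
/-- No edge is read exactly once by the passages of `O`. -/
def NoFreeEdge (O : Finset (V × ZMod L)) : Prop :=
  ∀ o ∈ O, ∃ o' ∈ O, o' ≠ o ∧ W.edge S o' = W.edge S o

variable {O : Finset (V × ZMod L)}

section UnionOfLifts

variable (hO : W.IsUnionOfLifts S O)
include hO

lemma IsUnionOfLifts.source_mem (ho : o ∈ O) : W.source S o ∈ O := by
  rw [source]; cases (W.letter o.2).2 <;> simp [hO o, ho]

lemma IsUnionOfLifts.target_mem (ho : o ∈ O) : W.target S o ∈ O := by
  rw [target]; cases (W.letter o.2).2 <;> simp [hO o, ho]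

lemma IsUnionOfLifts.next_pow_mem (ho : o ∈ O) (t : ℕ) : (W.next S ^ t) o ∈ O := by
  induction t with
  | zero => exact ho
  | succ t ih => rwa [pow_succ', Equiv.Perm.mul_apply, hO]

lemma EdgeTop.of_source (h : W.VertexTop O (W.source S o)) : W.EdgeTop S O o :=
  fun _ ho' he => h _ (hO.source_mem ho') (source_fst_eq he)

lemma EdgeTop.of_target (h : W.VertexTop O (W.target S o)) : W.EdgeTop S O o :=
  fun _ ho' he => (rank_target_le_iff he).2 (h _ (hO.target_mem ho') (target_fst_eq he))

lemma VertexTop.edgeTop (h : W.VertexTop O o) : W.EdgeTop S O o := by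
  cases hb : (W.letter o.2).2
  · exact .of_target hO (by simpa [target, hb] using h)
  · exact .of_source hO (by simpa [source, hb] using h)

lemma VertexTop.edgeTop_of_next (h : W.VertexTop O (W.next S o)) : W.EdgeTop S O o := by
  cases hb : (W.letter o.2).2
  · exact .of_source hO (by simpa [source, hb] using h)
  · exact .of_target hO (by simpa [target, hb] using h)

end UnionOfLifts

lemma exists_next_pow_vertexTop [NeZero L] (O : Finset (V × ZMod L)) (o : V × ZMod L) :
    ∃ t : ℕ, W.VertexTop O ((W.next S ^ t) o) := by
  obtain ⟨j, hj⟩ := Finite.exists_max W.rank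
  refine ⟨(j - o.2).val, fun p _ _ => ?_⟩
  rw [← o.eta, next_pow_apply, ZMod.natCast_zmod_val, add_sub_cancel]
  exact hj p.2

/-- A lift of the word passes the lowest level somewhere, where it is not on top of its edge, and
the highest level somewhere else. Just before it first comes to the top of a vertex, it is on top
of an edge only. -/
lemma exists_edgeTop_not_vertexTop [NeZero L] (hO : W.IsUnionOfLifts S O)
    (hfree : W.NoFreeEdge S O) (ho : o ∈ O) :
    ∃ t : ℕ, W.EdgeTop S O ((W.next S ^ t) o) ∧ ¬W.VertexTop O ((W.next S ^ t) o) := by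
  classical
  obtain ⟨t, hbot⟩ := W.dual.exists_next_pow_vertexTop (S := S) O o
  let p := (W.next S ^ t) o
  have hbot : W.dual.EdgeTop S O p := VertexTop.edgeTop (W := W.dual) hO hbot
  have hp : ¬W.EdgeTop S O p := fun htop => by
    obtain ⟨q, hq, hne, he⟩ := hfree p (hO.next_pow_mem ho t)
    exact hne (eq_of_edge_eq he (le_antisymm (htop q hq he) (hbot q hq he)))
  have hex : ∃ k : ℕ, W.VertexTop O ((W.next S ^ k) p) := W.exists_next_pow_vertexTop O p
  have htop := Nat.find_spec hex
  obtain hzero | ⟨k, hk⟩ : Nat.find hex = 0 ∨ ∃ k, Nat.find hex = k + 1 := by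
    cases Nat.find hex <;> simp
  · rw [hzero] at htop
    exact absurd (htop.edgeTop hO) hp
  · refine ⟨k + t, ?_, ?_⟩ <;> rw [pow_add, Equiv.Perm.mul_apply]
    · rw [hk, pow_succ', Equiv.Perm.mul_apply] at htop
      exact htop.edgeTop_of_next hO
    · exact Nat.find_min hex (by omega)

section Chains

variable (K : Type*) [Field K]

variable (W) in
/-- The sign with which the letter at position `j` traverses its edge. -/
def sign (j : ZMod L) : K := bif (W.letter j).2 then 1 else -1

variable (W S) in
/-- The linear map which sends a passage to the edge read after it, with its sign. On the invariant
combinations of passages it is the cellular boundary of the complex obtained by attaching a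
two-cell along every lift of the word. -/
noncomputable def boundary : ((V × ZMod L) →₀ K) →ₗ[K] ((V × α) →₀ K) :=
  Finsupp.linearCombination K (fun o => Finsupp.single (W.edge S o) (W.sign K o.2))

variable (W S) in
lemma path_letter (o : V × ZMod L) :
    S.path K o.1 (FreeGroup.mk [W.letter o.2]) = Finsupp.single (W.edge S o) (W.sign K o.2) := by
  rw [edge, source, sign, next_apply]
  rcases W.letter o.2 with ⟨a, b⟩
  rw [S.path_mk_singleton K]
  cases b <;> rfl

variable {K}

lemma boundary_apply_of_unique (huniq : ∀ o' ∈ O, W.edge S o' = W.edge S o → o' = o)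
    {β : (V × ZMod L) →₀ K} (hβ : β.support ⊆ O) :
    W.boundary S K β (W.edge S o) = β o * W.sign K o.2 := by
  classical
  rw [boundary, Finsupp.linearCombination_apply, Finsupp.sum_apply, Finsupp.sum,
    Finset.sum_eq_single o]
  · simp
  · intro p hp hpo
    have : W.edge S p ≠ W.edge S o := fun h => hpo (huniq p (hβ hp) h)
    simp [Finsupp.single_eq_of_ne this.symm]
  · intro h
    simp [Finsupp.notMem_support_iff.1 h]

variable (W S K) in
/-- The combinations of the lifts of the word contained in a set of passages, each lift being
identified with the sum of its passages. -/
def cellChains (O : Set (V × ZMod L)) : Submodule K ((V × ZMod L) →₀ K) where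
  carrier := {β | (∀ o, β (W.next S o) = β o) ∧ β ∈ Finsupp.supported K K O}
  add_mem' := fun ⟨ha, ha'⟩ ⟨hb, hb'⟩ => ⟨fun o => by simp [ha, hb], add_mem ha' hb'⟩
  zero_mem' := ⟨fun _ => rfl, zero_mem _⟩
  smul_mem' c _ := fun ⟨hb, hb'⟩ => ⟨fun o => by simp [hb], Submodule.smul_mem _ c hb'⟩

lemma cellChains_le_supported (O : Set (V × ZMod L)) :
    W.cellChains S K O ≤ Finsupp.supported K K O := fun _ hβ => hβ.2

lemma finiteDimensional_cellChains (O : Finset (V × ZMod L)) :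
    FiniteDimensional K (W.cellChains S K O) :=
  have := finiteDimensional_supported (K := K) O
  Submodule.finiteDimensional_of_le (cellChains_le_supported _)

section Count

variable [NeZero L] (hO : W.IsUnionOfLifts S O) (hfree : W.NoFreeEdge S O)
include hO hfree

open Classical in
lemma finrank_cellChains_le_card :
    Module.finrank K (W.cellChains S K O) ≤
      (O.filter (W.EdgeTop S O) \ O.filter (W.VertexTop O)).card := by
  set T := O.filter (W.EdgeTop S O) \ O.filter (W.VertexTop O)
  let f : W.cellChains S K O →ₗ[K] (T → K) :=
    (LinearMap.pi fun o : T => Finsupp.lapply (R := K) o.1) ∘ₗ (W.cellChains S K O).subtype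
  have hf : Function.Injective f := by
    rintro ⟨β, hβ, hsupp⟩ ⟨β', hβ', hsupp'⟩ h
    refine Subtype.ext (Finsupp.ext fun o => ?_)
    by_cases ho : o ∈ O
    · obtain ⟨t, hedge, hvertex⟩ := exists_edgeTop_not_vertexTop hO hfree ho
      have heq := congrFun h ⟨(W.next S ^ t) o, by
        simp [T, hedge, hvertex, hO.next_pow_mem ho]⟩
      have hsame := (Equiv.Perm.SameCycle.refl (W.next S) o).pow_right (n := t)
      exact (apply_eq_of_sameCycle hβ hsame).symm.trans
        (heq.trans (apply_eq_of_sameCycle hβ' hsame))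
    · exact ((Finsupp.mem_supported' K β).1 hsupp o ho).trans
        ((Finsupp.mem_supported' K β').1 hsupp' o ho).symm
  simpa using LinearMap.finrank_le_finrank_of_injective hf

lemma finrank_cellChains_le :
    Module.finrank K (W.cellChains S K O) ≤
      Module.finrank K (S.cyclesOn K (W.edge S '' O)) := by
  classical
  have hedges : (O.filter (W.EdgeTop S O)).card = (O.image (W.edge S)).card :=
    card_filter_isFiberMax (f := W.edge S) (fun _ _ => eq_of_edge_eq) O
  have hvertices : (O.filter (W.VertexTop O)).card = (O.image Prod.fst).card :=
    card_filter_isFiberMax (fun _ _ h hrank => Prod.ext h (W.rank_injective hrank)) O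
  have hbetti := S.card_le_card_add_finrank_cyclesOn K (E := O.image (W.edge S))
    (U := O.image Prod.fst) <| Finset.forall_mem_image.2 fun o ho =>
      ⟨Finset.mem_image_of_mem Prod.fst (hO.source_mem ho),
        target_fst W S o ▸ Finset.mem_image_of_mem Prod.fst (hO.target_mem ho)⟩
  have hsub : O.filter (W.VertexTop O) ⊆ O.filter (W.EdgeTop S O) :=
    Finset.monotone_filter_right O fun o _ h => h.edgeTop hO
  have hcells := finrank_cellChains_le_card (K := K) hO hfree
  rw [Finset.card_sdiff_of_subset hsub] at hcells
  rw [Finset.coe_image] at hbetti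
  omega

lemma disjoint_cellChains_ker_boundary_of_noFreeEdge
    (hsurj : S.cyclesOn K (W.edge S '' O) ≤ (W.cellChains S K O).map (W.boundary S K)) :
    Disjoint (W.cellChains S K O) (LinearMap.ker (W.boundary S K)) := by
  have := finiteDimensional_cellChains (W := W) (S := S) (K := K) O
  have hrank := finrank_map_add_finrank_inf_ker (W.boundary S K) (W.cellChains S K O)
  have hle := Submodule.finrank_mono hsurj
  have hcells := finrank_cellChains_le (K := K) hO hfree
  rw [disjoint_iff, ← Submodule.finrank_eq_zero (R := K)]
  omega

end Count

open Classical in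
variable (W S) in
/-- The result of removing from a set of passages the lift through `o`. -/
noncomputable def removeLift (O : Finset (V × ZMod L)) (o : V × ZMod L) : Finset (V × ZMod L) :=
  O.filter fun p => ¬(W.next S).SameCycle o p

lemma mem_removeLift {p : V × ZMod L} :
    p ∈ W.removeLift S O o ↔ p ∈ O ∧ ¬(W.next S).SameCycle o p := by
  classical exact Finset.mem_filter

lemma removeLift_ssubset (ho : o ∈ O) : W.removeLift S O o ⊂ O := by
  classical exact Finset.filter_ssubset.2 ⟨o, ho, by simp [Equiv.Perm.SameCycle.refl]⟩

lemma IsUnionOfLifts.removeLift (hO : W.IsUnionOfLifts S O) (o : V × ZMod L) :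
    W.IsUnionOfLifts S (W.removeLift S O o) := fun p => by
  rw [mem_removeLift, mem_removeLift, hO, Equiv.Perm.sameCycle_apply_right]

lemma mem_cellChains_removeLift {β : (V × ZMod L) →₀ K} (hβ : β ∈ W.cellChains S K O)
    (hzero : β o = 0) : β ∈ W.cellChains S K (W.removeLift S O o) := by
  refine ⟨hβ.1, fun p hp => mem_removeLift.2 ⟨hβ.2 hp, fun hsame => ?_⟩⟩
  exact Finsupp.mem_support_iff.1 hp ((apply_eq_of_sameCycle hβ.1 hsame).trans hzero)

/-- A lift which reads an edge that is not read a second time can be removed; when there is none, a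
count of ranks applies. -/
theorem disjoint_cellChains_ker_boundary [NeZero L] (hO : W.IsUnionOfLifts S O)
    (hsurj : S.cyclesOn K (W.edge S '' O) ≤ (W.cellChains S K O).map (W.boundary S K)) :
    Disjoint (W.cellChains S K O) (LinearMap.ker (W.boundary S K)) := by
  induction O using Finset.strongInduction with
  | H O ih =>
  by_cases hfree : W.NoFreeEdge S O
  · exact disjoint_cellChains_ker_boundary_of_noFreeEdge hO hfree hsurj
  unfold NoFreeEdge at hfree
  push Not at hfree
  obtain ⟨o, ho, huniq⟩ := hfree
  replace huniq : ∀ o' ∈ O, W.edge S o' = W.edge S o → o' = o := fun o' ho' =>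
    not_imp_not.1 (huniq o' ho')
  have hsign : W.sign K o.2 ≠ 0 := by rw [sign]; cases (W.letter o.2).2 <;> simp
  have hremove (β) (hβ : β ∈ W.cellChains S K O) (h : W.boundary S K β (W.edge S o) = 0) :
      β ∈ W.cellChains S K (W.removeLift S O o) := by
    rw [boundary_apply_of_unique huniq hβ.2] at h
    exact mem_cellChains_removeLift hβ ((mul_eq_zero.1 h).resolve_right hsign)
  have hsub := removeLift_ssubset (W := W) (S := S) ho
  have hdisj := ih _ hsub (hO.removeLift o) fun z hz => by
    have hz' := hsurj ⟨Finsupp.supported_mono (Set.image_mono hsub.1) hz.1, hz.2⟩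
    obtain ⟨β, hβ, rfl⟩ := hz'
    refine ⟨β, hremove β hβ ((Finsupp.mem_supported' K _).1 hz.1 _ ?_), rfl⟩
    rintro ⟨p, hp, he⟩
    obtain ⟨hpO, hp⟩ := mem_removeLift.1 hp
    exact hp (huniq p hpO he ▸ .refl _ _)
  refine LinearMap.disjoint_ker.2 fun β hβ hzero => ?_
  exact LinearMap.disjoint_ker.1 hdisj β (hremove β hβ (by simp [hzero])) hzero

end Chains

end StackedWord

section LinearIndependence

variable {K ι X : Type*} [Field K]

lemma linearIndepOn_of_apply_eq_zero {v : ι → (X →₀ K)} {I : Set ι} (p : ι → X)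
    (hdiag : ∀ i ∈ I, v i (p i) ≠ 0) (hoff : ∀ i ∈ I, ∀ k ∈ I, k ≠ i → v k (p i) = 0) :
    LinearIndepOn K v I := by
  refine linearIndepOn_iff'.2 fun t x ht hx i hi => ?_
  have heval := DFunLike.congr_fun hx (p i)
  rw [Finsupp.finsetSum_apply, Finset.sum_eq_single_of_mem i hi fun k hk hki => ?_] at heval
  · exact (mul_eq_zero.1 heval).resolve_right (hdiag i (ht hi))
  · rw [Finsupp.smul_apply, hoff i (ht hi) k (ht hk) hki, smul_zero]

end LinearIndependence

namespace StackedWord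

variable {α Λ V : Type*} [LinearOrder Λ] {L : ℕ} (W : StackedWord α L Λ)

section Trace

variable (K : Type*) [Field K] (S : RoseCover α V)

/-- The sum of the passages at which `t` successive letters of the word are read, starting with the
passage `o`. -/
noncomputable def trace (o : V × ZMod L) (t : ℕ) : (V × ZMod L) →₀ K :=
  ∑ s ∈ Finset.range t, Finsupp.single ((W.next S ^ s) o) 1

lemma boundary_trace (v : V) (j : ZMod L) (t : ℕ) :
    W.boundary S K (W.trace K S (v, j) t) = S.path K v (W.letter.segment j t) := by
  rw [trace]
  induction t with
  | zero => simp
  | succ t ih =>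
    rw [Finset.sum_range_succ, map_add, ih, CyclicWord.segment_succ, S.path_mul, next_pow_apply,
      boundary, Finsupp.linearCombination_single, one_smul, ← path_letter]

variable {K S} {o p : V × ZMod L} {t : ℕ}

lemma mapDomain_next_trace (h : (W.next S ^ t) o = o) :
    Finsupp.mapDomain (W.next S) (W.trace K S o t) = W.trace K S o t := by
  simp only [trace, Finsupp.mapDomain_finsetSum, Finsupp.mapDomain_single, ← Equiv.Perm.mul_apply,
    ← pow_succ']
  have hsum := Finset.sum_range_succ (fun s => Finsupp.single ((W.next S ^ s) o) (1 : K)) t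
  rw [Finset.sum_range_succ', h, pow_zero, Equiv.Perm.one_apply] at hsum
  exact add_right_cancel hsum

lemma trace_mem_cellChains (h : (W.next S ^ t) o = o) {O : Set (V × ZMod L)}
    (hO : ((W.trace K S o t).support : Set (V × ZMod L)) ⊆ O) :
    W.trace K S o t ∈ W.cellChains S K O := by
  refine ⟨fun p => ?_, hO⟩
  conv_lhs => rw [← W.mapDomain_next_trace h, Finsupp.mapDomain_apply (W.next S).injective]

lemma trace_apply_eq_zero (h : ∀ s, (W.next S ^ s) o ≠ p) : W.trace K S o t p = 0 := by
  rw [trace, Finsupp.finsetSum_apply]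
  exact Finset.sum_eq_zero fun s _ => Finsupp.single_eq_of_ne (h s).symm

lemma trace_apply_self_ne_zero [CharZero K] (ht : t ≠ 0) : W.trace K S o t o ≠ 0 := by
  classical
  have hcount : W.trace K S o t o =
      ((Finset.range t).filter fun s => (W.next S ^ s) o = o).card := by
    simp [trace, Finsupp.finsetSum_apply, Finsupp.single_apply]
  rw [hcount, Nat.cast_ne_zero, ← Nat.pos_iff_ne_zero, Finset.card_pos]
  exact ⟨0, by simp [Nat.pos_of_ne_zero ht]⟩

end Trace

section Relator

variable [NeZero L] {m : ℕ} (hm : m ≠ 0)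
include hm

/-- Two-cells attached along the generators kill the fundamental group, so that their boundaries
span all cycles, as `disjoint_cellChains_ker_boundary` requires. -/
theorem linearIndepOn_path_of_loops_eq_closure {K : Type*} [Field K] [CharZero K]
    {S : RoseCover α V} {b : V} (hb : ∀ v, ∃ w, S.walk w b = v) (T : Finset (FreeGroup α))
    (hT : S.loops b = Subgroup.closure
      ((fun u => u * W.letter.segment 0 L ^ m * u⁻¹) '' (T : Set (FreeGroup α))))
    {ι : Type*} {I : Set ι} {u : ι → FreeGroup α} (hu : ∀ i ∈ I, u i ∈ T)
    (hdisj : ∀ i ∈ I, ∀ k ∈ I, ∀ s : ℕ,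
      S.walk (W.letter.segment 0 L ^ s) (S.walk (u i) b) = S.walk (u k) b → i = k) :
    LinearIndepOn K (fun i => S.path K (S.walk (u i) b) (W.letter.segment 0 L ^ m)) I := by
  classical
  let tr (v : FreeGroup α) := W.trace K S (S.walk v b, 0) (L * m)
  have hboundary (v) : W.boundary S K (tr v) =
      S.path K (S.walk v b) (W.letter.segment 0 L ^ m) := by
    rw [boundary_trace, CyclicWord.segment_length_mul]
  let O : Finset (V × ZMod L) := T.biUnion fun v => (tr v).support
  have hclosed (v) (hv : v ∈ T) :
      (W.next S ^ (L * m)) (S.walk v b, 0) = (S.walk v b, 0) := by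
    have hloop := S.conj_mem_loops_iff.1 (hT.ge (Subgroup.subset_closure ⟨v, hv, rfl⟩))
    rw [next_pow_apply, CyclicWord.segment_length_mul, RoseCover.mem_loops.1 hloop]
    simp
  have htrace (v) (hv : v ∈ T) : tr v ∈ W.cellChains S K O :=
    W.trace_mem_cellChains (hclosed v hv)
      (Finset.subset_biUnion_of_mem (fun v => (tr v).support) hv)
  have hO : W.IsUnionOfLifts S O := fun p => by
    simp only [O, Finset.mem_biUnion, Finsupp.mem_support_iff]
    exact exists_congr fun v => and_congr_right fun hv => by rw [(htrace v hv).1]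
  have hsurj : S.cyclesOn K (W.edge S '' O) ≤ (W.cellChains S K O).map (W.boundary S K) := by
    refine fun z hz => Submodule.span_le.2 ?_ (S.mem_span_path_of_loops_eq_closure hb hT hz.2)
    rintro _ ⟨v, hv, rfl⟩
    exact ⟨tr v, htrace v hv, hboundary v⟩
  have hindep : LinearIndepOn K (fun i => tr (u i)) I := by
    refine linearIndepOn_of_apply_eq_zero (fun i => (S.walk (u i) b, 0))
      (fun i _ => W.trace_apply_self_ne_zero (mul_ne_zero (NeZero.ne L) hm))
      fun i hi k hk hki => W.trace_apply_eq_zero fun s hs => hki ?_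
    rw [next_pow_apply, Prod.mk.injEq, zero_add, ZMod.natCast_eq_zero_iff] at hs
    obtain ⟨hwalk, q, rfl⟩ := hs
    exact hdisj k hk i hi q (by rwa [CyclicWord.segment_length_mul] at hwalk)
  simp only [← hboundary]
  refine hindep.map_injOn _ (LinearMap.injOn_of_disjoint_ker ?_
    (disjoint_cellChains_ker_boundary hO hsurj))
  exact Submodule.span_le.2 (Set.image_subset_iff.2 fun i hi => htrace _ (hu i hi))

end Relator

end StackedWord

section Subgroup

variable {G : Type*} [Group G]

lemma mem_commutator_of_mem_commutator_iSup {ι : Type*} [Nonempty ι] {M : ι → Subgroup G}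
    (hM : Directed (· ≤ ·) M) {w : G} (hw : w ∈ ⁅⨆ i, M i, ⨆ i, M i⁆) : ∃ i, w ∈ ⁅M i, M i⁆ := by
  have hdir : Directed (· ≤ ·) fun i => ⁅M i, M i⁆ :=
    Directed.mono_comp (· ≤ ·) (g := fun H : Subgroup G => ⁅H, H⁆)
      (fun _ _ h => Subgroup.commutator_mono h h) hM
  rw [← Subgroup.mem_iSup_of_directed hdir]
  refine Subgroup.commutator_le.2 (fun x hx y hy => ?_) hw
  obtain ⟨i, hi⟩ := (Subgroup.mem_iSup_of_directed hM).1 hx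
  obtain ⟨j, hj⟩ := (Subgroup.mem_iSup_of_directed hM).1 hy
  obtain ⟨k, hik, hjk⟩ := hM i j
  exact (Subgroup.mem_iSup_of_directed hdir).2
    ⟨k, Subgroup.commutator_mem_commutator (hik hi) (hjk hj)⟩

lemma exists_finset_mem_commutator_closure {ι : Type*} (f : ι → G) {w : G}
    (hw : w ∈ ⁅Subgroup.closure (Set.range f), Subgroup.closure (Set.range f)⁆) (T₀ : Finset ι) :
    ∃ T : Finset ι, T₀ ⊆ T ∧ w ∈ ⁅Subgroup.closure (f '' T), Subgroup.closure (f '' T)⁆ := by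
  classical
  have hmono : Monotone fun T : Finset ι => Subgroup.closure (f '' T) := fun _ _ h =>
    Subgroup.closure_mono (Set.image_mono (Finset.coe_subset.2 h))
  have hrange : Subgroup.closure (Set.range f) = ⨆ T : Finset ι, Subgroup.closure (f '' T) := by
    rw [← Subgroup.closure_iUnion, ← Set.image_iUnion,
      Set.iUnion_eq_univ_iff.2 fun i => ⟨{i}, by simp⟩, Set.image_univ]
  rw [hrange] at hw
  obtain ⟨T, hT⟩ := mem_commutator_of_mem_commutator_iSup hmono.directed_le hw
  exact ⟨T₀ ∪ T, Finset.subset_union_left, Subgroup.commutator_mono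
    (hmono Finset.subset_union_right) (hmono Finset.subset_union_right) hT⟩

lemma normalClosure_singleton_eq_closure (g : G) :
    Subgroup.normalClosure {g} = Subgroup.closure (Set.range fun u => u * g * u⁻¹) := by
  rw [Subgroup.normalClosure]
  congr 1
  ext x
  simp [Group.conjugatesOfSet, conjugatesOf, isConj_iff]

lemma normalClosure_singleton_conj (g x : G) :
    Subgroup.normalClosure {g * x * g⁻¹} = Subgroup.normalClosure {x} := by
  have hle (g x : G) : Subgroup.normalClosure {g * x * g⁻¹} ≤ Subgroup.normalClosure {x} :=
    Subgroup.normalClosure_le_normal (Set.singleton_subset_iff.2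
      (Subgroup.normalClosure_normal.conj_mem x
        (Subgroup.subset_normalClosure (Set.mem_singleton x)) g))
  exact (hle g x).antisymm (by simpa [mul_assoc] using hle g⁻¹ (g * x * g⁻¹))

end Subgroup

namespace RoseCover

variable {α ι G : Type*} [Group G] {π : FreeGroup α →* G} {r : FreeGroup α}

lemma prod_conj_mem_commutator_ker (hπ : Function.Surjective π) (hr : r ∈ π.ker)
    {u : ι → FreeGroup α} {x : ι → ℤ} {l : List ι}
    (h : (l.map fun i => x i • (cayley π).path ℤ (π (u i)) r).sum = 0) :
    (l.map fun i => (u i * r * (u i)⁻¹) ^ x i).prod ∈ ⁅π.ker, π.ker⁆ := by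
  have hpath := (cayley π).path_prod_conj_zpow ℤ (v := 1) r u x l
    fun i _ => (loops_cayley π _).ge hr
  simp only [walk_cayley, one_mul] at hpath
  rw [← loops_cayley π 1]
  refine mem_commutator_of_path_eq_zero (exists_walk_cayley_eq hπ)
    (Subgroup.list_prod_mem _ fun y hy => ?_) (hpath.trans h)
  obtain ⟨i, _, rfl⟩ := List.mem_map.1 hy
  exact zpow_mem ((loops_cayley π 1).ge ((MonoidHom.normal_ker π).conj_mem r hr (u i))) _

end RoseCover

/-- Lyndon's identity theorem. If the generators of the relation module satisfy a relation, so do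
finitely many of them already in the covering whose fundamental group is generated by finitely many
conjugates of the relator. -/
theorem StackedWord.linearIndependent_path_cayley {α Λ G ι : Type*} [LinearOrder Λ] [Group G]
    {L : ℕ} [NeZero L] (W : StackedWord α L Λ) {m : ℕ} (hm : m ≠ 0) {π : FreeGroup α →* G}
    (hπ : Function.Surjective π)
    (hker : π.ker = Subgroup.normalClosure {W.letter.segment 0 L ^ m}) {g : ι → G}
    (hdisj : ∀ i k, ∀ s : ℕ, g i * π (W.letter.segment 0 L) ^ s = g k → i = k) :
    LinearIndependent ℤ fun i =>
      (RoseCover.cayley π).path ℤ (g i) (W.letter.segment 0 L ^ m) := by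
  classical
  refine linearIndependent_iff'.2 fun J x hx i hi => ?_
  choose u hu using fun i => hπ (g i)
  set r := W.letter.segment 0 L ^ m
  simp only [← hu] at hx
  rw [← Finset.sum_map_toList] at hx
  have hcomm := RoseCover.prod_conj_mem_commutator_ker hπ
    (hker.ge (Subgroup.subset_normalClosure rfl)) hx
  rw [hker, normalClosure_singleton_eq_closure] at hcomm
  obtain ⟨T, hJT, hT⟩ := exists_finset_mem_commutator_closure _ hcomm (J.image u)
  set M := Subgroup.closure ((fun u => u * r * u⁻¹) '' (T : Set (FreeGroup α)))
  have hM : M ≤ π.ker := by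
    rw [hker, normalClosure_singleton_eq_closure]
    exact Subgroup.closure_mono (Set.image_subset_range _ _)
  have huT (k) (hk : k ∈ J) : u k ∈ T := hJT (Finset.mem_image_of_mem u hk)
  have hsum := (RoseCover.schreier M).path_eq_zero_of_mem_commutator ℚ
    ((RoseCover.loops_schreier M).symm ▸ hT)
  rw [RoseCover.path_prod_conj_zpow ℚ r u x _ fun k hk => ?_, Finset.sum_map_toList] at hsum
  · have hindep := W.linearIndepOn_path_of_loops_eq_closure (K := ℚ) hm
      (RoseCover.exists_walk_schreier_eq M) T (RoseCover.loops_schreier M) (I := J) huT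
      fun i _ k _ s h => hdisj i k s ?_
    · simp only [← Int.cast_smul_eq_zsmul ℚ] at hsum
      exact_mod_cast linearIndepOn_finset_iff.1 hindep _ hsum i hi
    · rw [← RoseCover.walk_mul_apply, RoseCover.walk_schreier_one, RoseCover.walk_schreier_one,
        QuotientGroup.eq, inv_inv] at h
      simpa [mul_inv_eq_one, hu] using MonoidHom.mem_ker.1 (hM h)
  · refine RoseCover.conj_mem_loops_iff _ |>.1 ((RoseCover.loops_schreier M).ge ?_)
    exact Subgroup.subset_closure ⟨u k, huT k (Finset.mem_toList.1 hk), rfl⟩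

section ThreeTermComplex

universe u v

variable {A : Type u} [Ring A] {M₀ M₁ M₂ N : ModuleCat.{v} A}

variable (M₀ M₁ M₂) in
/-- The terms of the chain complex `0 → M₂ → M₁ → M₀`. -/
def threeTermX : ℕ → ModuleCat.{v} A
  | 0 => M₀
  | 1 => M₁
  | 2 => M₂
  | _ + 3 => ModuleCat.of A PUnit

/-- The differentials of the chain complex `0 → M₂ → M₁ → M₀`. -/
def threeTermD (d₁ : M₁ ⟶ M₀) (d₂ : M₂ ⟶ M₁) :
    ∀ n, threeTermX M₀ M₁ M₂ (n + 1) ⟶ threeTermX M₀ M₁ M₂ n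
  | 0 => d₁
  | 1 => d₂
  | _ + 2 => 0

variable {d₁ : M₁ ⟶ M₀} {d₂ : M₂ ⟶ M₁} {ε : M₀ ⟶ N} (w₁ : d₂ ≫ d₁ = 0) (w₀ : d₁ ≫ ε = 0)

/-- The chain complex `0 → M₂ → M₁ → M₀`. -/
noncomputable def threeTermComplex : ChainComplex (ModuleCat.{v} A) ℕ :=
  ChainComplex.of (threeTermX M₀ M₁ M₂) (threeTermD d₁ d₂) fun
    | 0 => w₁
    | _ + 1 => Limits.zero_comp

lemma threeTermComplex_d (n : ℕ) : (threeTermComplex w₁).d (n + 1) n = threeTermD d₁ d₂ n :=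
  ChainComplex.of_d _ _ n

lemma exactAt_threeTermComplex_succ (h₁ : Function.Exact d₂ d₁) (h₂ : Function.Injective d₂)
    (n : ℕ) : (threeTermComplex w₁).ExactAt (n + 1) := by
  rw [HomologicalComplex.exactAt_iff' _ (n + 1 + 1) (n + 1) n (by simp) (by simp),
    ShortComplex.moduleCat_exact_iff]
  intro x hx
  simp only [HomologicalComplex.sc', HomologicalComplex.shortComplexFunctor'] at x hx ⊢
  rw [threeTermComplex_d] at hx ⊢
  match n, x, hx with
  | 0, x, hx => exact (h₁ x).1 hx
  | 1, x, hx => exact ⟨0, (map_zero _).trans (h₂ (hx.trans (map_zero _).symm)).symm⟩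
  | n + 2, _, _ => exact ⟨0, Subsingleton.elim (α := PUnit) _ _⟩

/-- The augmentation of `0 → M₂ → M₁ → M₀` given by a map from `M₀`, as a map of complexes. -/
noncomputable def threeTermAugmentation :
    threeTermComplex w₁ ⟶ (ChainComplex.single₀ (ModuleCat.{v} A)).obj N :=
  (ChainComplex.toSingle₀Equiv _ _).symm ⟨ε, by rw [threeTermComplex_d]; exact w₀⟩

lemma quasiIsoAt_threeTermAugmentation_zero (hε : Function.Surjective ε)
    (h₀ : Function.Exact d₁ ε) : QuasiIsoAt (threeTermAugmentation w₁ w₀) 0 := by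
  rw [ChainComplex.quasiIsoAt₀_iff, ShortComplex.quasiIso_iff_of_zeros' _ rfl rfl rfl]
  refine (ShortComplex.exact_and_epi_g_iff_of_iso (S₂ := ShortComplex.mk d₁ ε w₀) ?_).2
    ⟨(ShortComplex.moduleCat_exact_iff _).2 fun x hx => (h₀ x).1 hx,
      (ModuleCat.epi_iff_surjective _).2 hε⟩
  refine ShortComplex.isoMk (Iso.refl _) (Iso.refl _) (Iso.refl _) ?_ ?_
  · simp only [Iso.refl_hom, HomologicalComplex.shortComplexFunctor'_obj_f, threeTermComplex_d]
    rfl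
  · have h := ChainComplex.toSingle₀Equiv_symm_apply_f_zero (C := threeTermComplex w₁) ε
      (by rw [threeTermComplex_d]; exact w₀)
    exact (Category.id_comp ε).trans (h.symm.trans (Category.comp_id _).symm)

instance projective_threeTermX [Projective M₀] [Projective M₁] [Projective M₂] :
    ∀ i, Projective (threeTermX M₀ M₁ M₂ i)
  | 0 | 1 | 2 => ‹_›
  | _ + 3 => inferInstanceAs (Projective (ModuleCat.of A PUnit))

/-- The projective resolution given by an exact sequence `0 → M₂ → M₁ → M₀ → N → 0` with
projective `M₀`, `M₁` and `M₂`. -/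
noncomputable def threeTermResolution [Projective M₀] [Projective M₁] [Projective M₂]
    (hε : Function.Surjective ε) (h₀ : Function.Exact d₁ ε) (h₁ : Function.Exact d₂ d₁)
    (h₂ : Function.Injective d₂) : ProjectiveResolution N where
  complex := threeTermComplex (ModuleCat.hom_ext (LinearMap.ext h₁.apply_apply_eq_zero))
  projective := projective_threeTermX
  π := threeTermAugmentation _ (ModuleCat.hom_ext (LinearMap.ext h₀.apply_apply_eq_zero))
  quasiIso := ⟨fun
    | 0 => quasiIsoAt_threeTermAugmentation_zero _ _ hε h₀
    | n + 1 => by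
      rw [quasiIsoAt_iff_exactAt' _ _ (ChainComplex.exactAt_succ_single_obj _ _)]
      exact exactAt_threeTermComplex_succ _ h₁ h₂ n⟩

end ThreeTermComplex

section PermutationModule

universe u

variable {K X : Type*} [Group K] [MulAction K X]

variable (K X) in
/-- The integral permutation representation of a group action, on the finitely supported chains. It
is `Representation.ofMulAction` with chains in place of the elements of a monoid algebra. -/
noncomputable def permRep : Representation ℤ K (X →₀ ℤ) where
  toFun g := Finsupp.lmapDomain ℤ ℤ (g • ·)
  map_one' := by ext; simp
  map_mul' g h := by ext; simp [mul_smul]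

@[simp] lemma permRep_single (g : K) (x : X) (t : ℤ) :
    permRep K X g (Finsupp.single x t) = Finsupp.single (g • x) t := by
  simp [permRep]

lemma bijective_smul_out [IsCancelSMul K X] :
    Function.Bijective fun p : MulAction.orbitRel.Quotient K X × K => p.2 • p.1.out := by
  refine ⟨fun ⟨ω, k⟩ ⟨ω', k'⟩ h => ?_, fun x => ?_⟩
  · have hω : ω = ω' := by
      simpa using congrArg (Quotient.mk (MulAction.orbitRel K X)) h
    subst hω
    simpa using IsCancelSMul.right_cancel k k' _ h
  · obtain ⟨k, hk⟩ := MulAction.orbitRel_apply.1 (Quotient.mk_out (s := MulAction.orbitRel K X) x)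
    exact ⟨(Quotient.mk _ x, k⁻¹), inv_smul_eq_iff.2 hk.symm⟩


variable (K X) in
/-- The module over the integral group ring of a permutation representation. -/
noncomputable abbrev permModule : ModuleCat (MonoidAlgebra ℤ K) :=
  ModuleCat.of (MonoidAlgebra ℤ K) (permRep K X).asModule

lemma single_smul_permModule_single (k : K) (t : ℤ) (x : X) :
    MonoidAlgebra.single k t • (permRep K X).asModuleEquiv.symm (Finsupp.single x 1) =
      (permRep K X).asModuleEquiv.symm (Finsupp.single (k • x) t) := by
  rw [LinearEquiv.eq_symm_apply, Representation.asModuleEquiv_map_smul]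
  simp

variable (K X) in
theorem nonempty_permModule_linearEquiv [IsCancelSMul K X] :
    Nonempty ((MulAction.orbitRel.Quotient K X →₀ MonoidAlgebra ℤ K)
      ≃ₗ[MonoidAlgebra ℤ K] permModule K X) := by
  let l : (MulAction.orbitRel.Quotient K X →₀ MonoidAlgebra ℤ K)
      →ₗ[MonoidAlgebra ℤ K] permModule K X :=
    Finsupp.linearCombination _ fun ω =>
      (permRep K X).asModuleEquiv.symm (Finsupp.single ω.out 1)
  let e : (MulAction.orbitRel.Quotient K X × K →₀ ℤ) ≃+
      (MulAction.orbitRel.Quotient K X →₀ MonoidAlgebra ℤ K) :=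
    Finsupp.curryAddEquiv.trans (Finsupp.mapRange.addEquiv MonoidAlgebra.coeffAddEquiv.symm)
  let f : (MulAction.orbitRel.Quotient K X × K →₀ ℤ) ≃+ permModule K X :=
    (Finsupp.domCongr (Equiv.ofBijective _ bijective_smul_out)).trans
      (permRep K X).asModuleEquiv.symm.toAddEquiv
  have h : l.toAddMonoidHom.comp e.toAddMonoidHom = f.toAddMonoidHom := by
    refine Finsupp.addHom_ext fun p t => ?_
    have he : e (Finsupp.single p t) = Finsupp.single p.1 (MonoidAlgebra.single p.2 t) := by
      simp [e]
    have hf : f (Finsupp.single p t) =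
        (permRep K X).asModuleEquiv.symm (Finsupp.single (p.2 • p.1.out) t) := by
      simp only [f, AddEquiv.trans_apply, Finsupp.domCongr_apply, Finsupp.equivMapDomain_single]
      rfl
    exact (congrArg l he).trans ((Finsupp.linearCombination_single _ _ _).trans
      ((single_smul_permModule_single p.2 t p.1.out).trans hf.symm))
  have hl : ⇑l = f ∘ e.symm := by
    funext x
    simpa using DFunLike.congr_fun h (e.symm x)
  exact ⟨.ofBijective l (hl ▸ f.bijective.comp e.symm.bijective)⟩

/-- The map of modules given by an equivariant map defined on a permutation representation. -/
noncomputable def permModuleHom {X V : Type u} [MulAction K X] [AddCommGroup V]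
    (ρ : Representation ℤ K V)
    (f : (X →₀ ℤ) →ₗ[ℤ] V)
    (hf : ∀ g x, f (Finsupp.single (g • x) 1) = ρ g (f (Finsupp.single x 1))) :
    permModule K X ⟶ ModuleCat.of (MonoidAlgebra ℤ K) ρ.asModule :=
  ModuleCat.ofHom (Representation.IntertwiningMap.equivLinearMapAsModule _ _
    { toLinearMap := f
      isIntertwining' g := by
        ext x
        simpa using hf g x })

end PermutationModule

section PermutationComplex

variable {K X X₀ X₁ X₂ : Type} [Group K] [MulAction K X] [IsCancelSMul K X]
  [MulAction K X₀] [MulAction K X₁] [MulAction K X₂]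
  [IsCancelSMul K X₀] [IsCancelSMul K X₁] [IsCancelSMul K X₂]

instance projective_permModule : Projective (permModule K X) := by
  obtain ⟨e⟩ := nonempty_permModule_linearEquiv K X
  have : Module.Projective (MonoidAlgebra ℤ K) (permModule K X) := .of_equiv e
  infer_instance

lemma nonempty_permModule_linearEquiv_fin [Finite (MulAction.orbitRel.Quotient K X)] :
    Nonempty (permModule K X ≃ₗ[MonoidAlgebra ℤ K]
      (Fin (Nat.card (MulAction.orbitRel.Quotient K X)) →₀ MonoidAlgebra ℤ K)) :=
  (nonempty_permModule_linearEquiv K X).map fun e =>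
    e.symm.trans (Finsupp.domLCongr (Finite.equivFin _))

/-- The chain complex of a free action on a contractible complex of dimension two computes a free
resolution. -/
theorem HasFreeResOfRanks.of_exact [Nonempty X₀] [Finite (MulAction.orbitRel.Quotient K X₀)]
    [Finite (MulAction.orbitRel.Quotient K X₁)] [Finite (MulAction.orbitRel.Quotient K X₂)]
    {d₁ : (X₁ →₀ ℤ) →ₗ[ℤ] (X₀ →₀ ℤ)} {d₂ : (X₂ →₀ ℤ) →ₗ[ℤ] (X₁ →₀ ℤ)}
    (hd₁ : ∀ (g : K) x, d₁ (Finsupp.single (g • x) 1) = permRep K X₀ g (d₁ (Finsupp.single x 1)))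
    (hd₂ : ∀ (g : K) x, d₂ (Finsupp.single (g • x) 1) = permRep K X₁ g (d₂ (Finsupp.single x 1)))
    (h₀ : Function.Exact d₁ (Finsupp.linearCombination ℤ fun _ : X₀ => (1 : ℤ)))
    (h₁ : Function.Exact d₂ d₁) (h₂ : Function.Injective d₂) :
    HasFreeResOfRanks K 2 fun
      | 0 => Nat.card (MulAction.orbitRel.Quotient K X₀)
      | 1 => Nat.card (MulAction.orbitRel.Quotient K X₁)
      | 2 => Nat.card (MulAction.orbitRel.Quotient K X₂)
      | _ => 0 := by
  have hε : Function.Surjective (Finsupp.linearCombination ℤ fun _ : X₀ => (1 : ℤ)) := fun t =>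
    ⟨Finsupp.single (Classical.arbitrary X₀) t, by simp⟩
  refine ⟨threeTermResolution (d₁ := permModuleHom (permRep K X₀) d₁ hd₁)
    (d₂ := permModuleHom (permRep K X₁) d₂ hd₂)
    (ε := permModuleHom (Representation.trivial ℤ K ℤ)
      (Finsupp.linearCombination ℤ fun _ : X₀ => (1 : ℤ)) (by simp)) hε h₀ h₁ h₂, ?_, ?_⟩
  · rintro (_ | _ | _ | i)
    · exact nonempty_permModule_linearEquiv_fin (X := X₀)
    · exact nonempty_permModule_linearEquiv_fin (X := X₁)
    · exact nonempty_permModule_linearEquiv_fin (X := X₂)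
    · exact ⟨(0 : PUnit ≃ₗ[MonoidAlgebra ℤ K] (Fin 0 →₀ MonoidAlgebra ℤ K))⟩
  · rintro (_ | _ | _ | i) hi <;> first | omega | rfl

end PermutationComplex

section Orbits

variable {G H : Type*} [Group G] [Group H]

/-- A surjection whose fibres are the orbits of an action identifies the orbits with its values. -/
noncomputable def orbitsEquiv {K X Ω : Type*} [Group K] [MulAction K X] {p : X → Ω}
    (hp : Function.Surjective p) (h : ∀ x y, p x = p y ↔ x ∈ MulAction.orbit K y) :
    MulAction.orbitRel.Quotient K X ≃ Ω :=
  (Quotient.congrRight fun x y => (MulAction.orbitRel_apply.trans (h x y).symm)).trans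
    (Setoid.quotientKerEquivOfSurjective p hp)

/-- The map of coset spaces induced by a homomorphism. -/
def cosetMap (ψ : G →* H) (C : Subgroup G) : G ⧸ C → H ⧸ C.map ψ :=
  Quotient.map' ψ fun x y h => by
    rw [QuotientGroup.leftRel_apply] at h ⊢
    exact ⟨_, h, by simp⟩

lemma cosetMap_mk (ψ : G →* H) (C : Subgroup G) (x : G) : cosetMap ψ C x = (ψ x : H) := rfl

variable {ψ : G →* H} {C : Subgroup G}

lemma cosetMap_surjective (hψ : Function.Surjective ψ) : Function.Surjective (cosetMap ψ C) :=
  QuotientGroup.mk_surjective.forall.2 fun y =>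
    let ⟨x, hx⟩ := hψ y
    ⟨x, hx ▸ cosetMap_mk ψ C x⟩

lemma cosetMap_eq_iff_mem_orbit_ker (q q' : G ⧸ C) :
    cosetMap ψ C q = cosetMap ψ C q' ↔ q ∈ MulAction.orbit ψ.ker q' := by
  induction q using QuotientGroup.induction_on with | H x
  induction q' using QuotientGroup.induction_on with | H y
  rw [cosetMap_mk, cosetMap_mk, QuotientGroup.eq]
  constructor
  · rintro ⟨c, hc, hcxy⟩
    refine ⟨⟨x * c * y⁻¹, by simp [MonoidHom.mem_ker, hcxy]⟩, QuotientGroup.eq.2 ?_⟩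
    simpa [mul_assoc] using hc
  · rintro ⟨⟨k, hk⟩, h⟩
    refine ⟨x⁻¹ * (k * y), QuotientGroup.eq.1 h.symm, by simp [MonoidHom.mem_ker.1 hk]⟩

lemma isCancelSMul_ker_quotient (hC : Disjoint C ψ.ker) : IsCancelSMul ψ.ker (G ⧸ C) := by
  refine isCancelSMul_iff_eq_one_of_smul_eq.2 fun ⟨k, hk⟩ q h => Subtype.ext ?_
  induction q using QuotientGroup.induction_on with | H x
  have hconj : x⁻¹ * (k * x) ∈ C := QuotientGroup.eq.1 h.symm
  have := hC.le_bot ⟨hconj, by simp [MonoidHom.mem_ker.1 hk]⟩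
  simpa [inv_mul_eq_one] using this

lemma eq_iff_mem_orbit_ker (x y : G) : ψ x = ψ y ↔ x ∈ MulAction.orbit ψ.ker y := by
  constructor
  · exact fun h => ⟨⟨x * y⁻¹, by simp [MonoidHom.mem_ker, h]⟩, inv_mul_cancel_right x y⟩
  · rintro ⟨⟨k, hk⟩, rfl⟩
    simpa [Subgroup.smul_def] using MonoidHom.mem_ker.1 hk

lemma disjoint_zpowers_ker {g : G} (hg : g ^ orderOf (ψ g) = 1) :
    Disjoint (Subgroup.zpowers g) ψ.ker := by
  rw [Subgroup.disjoint_def]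
  rintro _ ⟨j, rfl⟩ hj
  obtain ⟨i, rfl⟩ := orderOf_dvd_iff_zpow_eq_one.2 ((map_zpow ψ g j).symm.trans hj)
  simp [zpow_mul, hg]

lemma card_eq_card_quotient_map_zpowers_mul_orderOf (g : G) :
    Nat.card H = Nat.card (H ⧸ (Subgroup.zpowers g).map ψ) * orderOf (ψ g) := by
  rw [MonoidHom.map_zpowers, ← Nat.card_zpowers]
  exact Subgroup.card_eq_card_quotient_mul_card_subgroup _

end Orbits

namespace RoseCover

variable {α G : Type*} [Group G]

/-- The action of a group on the edges of a Cayley graph. -/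
abbrev edgeMulAction : MulAction G (G × α) where
  smul g e := (g * e.1, e.2)
  one_smul e := Prod.ext (one_mul e.1) rfl
  mul_smul g h e := Prod.ext (mul_assoc g h e.1) rfl

attribute [local instance] edgeMulAction

lemma edge_smul_def (g : G) (e : G × α) : g • e = (g * e.1, e.2) := rfl

variable (π : FreeGroup α →* G)

lemma permRep_path_cayley (g v : G) (w : FreeGroup α) :
    permRep G (G × α) g ((cayley π).path ℤ v w) = (cayley π).path ℤ (g * v) w :=
  mapDomain_path ℤ (f := (g * ·)) (fun a v => (mul_assoc g v (π (.of a))).symm) v w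

lemma edgeBoundary_cayley_single (e : G × α) :
    (cayley π).edgeBoundary ℤ (Finsupp.single e 1) =
      Finsupp.single (e.1 * π (.of e.2)) 1 - Finsupp.single e.1 1 := by
  have := (cayley π).edgeBoundary_path ℤ e.1 (.of e.2)
  rwa [path_of, walk_cayley] at this

lemma edgeBoundary_cayley_smul (g : G) (e : G × α) :
    (cayley π).edgeBoundary ℤ (Finsupp.single (g • e) 1) =
      permRep G G g ((cayley π).edgeBoundary ℤ (Finsupp.single e 1)) := by
  simp [edgeBoundary_cayley_single, edge_smul_def, mul_assoc]

/-- The boundary of the two-cells of the Cayley complex of `⟨α ∣ c ^ m⟩`, one for each coset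
of the subgroup generated by `c`. -/
noncomputable def cellBoundary (c : FreeGroup α) (m : ℕ) :
    ((G ⧸ Subgroup.zpowers (π c)) →₀ ℤ) →ₗ[ℤ] ((G × α) →₀ ℤ) :=
  Finsupp.linearCombination ℤ fun q => (cayley π).path ℤ q.out (c ^ m)

variable {π} {c : FreeGroup α} {m : ℕ}

lemma cellBoundary_single (hc : c ^ m ∈ π.ker) (g : G) :
    cellBoundary π c m (Finsupp.single (g : G ⧸ Subgroup.zpowers (π c)) 1) =
      (cayley π).path ℤ g (c ^ m) := by
  obtain ⟨⟨_, j, rfl⟩, hj⟩ := QuotientGroup.mk_out_eq_mul (Subgroup.zpowers (π c)) g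
  have hcomm : c ^ j * c ^ m = c ^ m * c ^ j :=
    ((Commute.refl c).zpow_left j).pow_right m
  have hpath := congrArg ((cayley π).path ℤ g) hcomm
  rw [path_mul_of_mem_loops ℤ ((loops_cayley π g).ge hc), path_mul, add_comm, add_left_inj,
    walk_cayley, map_zpow] at hpath
  rwa [cellBoundary, Finsupp.linearCombination_single, one_smul, hj]

lemma cellBoundary_smul (hc : c ^ m ∈ π.ker) (g : G) (q : G ⧸ Subgroup.zpowers (π c)) :
    cellBoundary π c m (Finsupp.single (g • q) 1) =
      permRep G (G × α) g (cellBoundary π c m (Finsupp.single q 1)) := by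
  induction q using QuotientGroup.induction_on with
  | H x =>
    rw [MulAction.Quotient.smul_coe, smul_eq_mul, cellBoundary_single hc, cellBoundary_single hc,
      permRep_path_cayley]

section Exactness

variable (hπ : Function.Surjective π)
include hπ

lemma exact_edgeBoundary_cayley :
    Function.Exact ((cayley π).edgeBoundary ℤ)
      (Finsupp.linearCombination ℤ fun _ : G => (1 : ℤ)) := by
  refine LinearMap.exact_of_comp_eq_zero_of_ker_le_range ?_ fun y hy => ?_
  · exact Finsupp.lhom_ext' fun e => LinearMap.ext_ring (by simp [edgeBoundary_cayley_single])
  · have hdecomp : y = y.sum fun g t => t • (Finsupp.single g (1 : ℤ) - Finsupp.single 1 1) := by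
      have hsum : (y.sum fun _ t => t) = 0 := by
        simpa [Finsupp.linearCombination_apply] using LinearMap.mem_ker.1 hy
      simp only [smul_sub, Finsupp.smul_single, smul_eq_mul, mul_one, Finsupp.sum_sub,
        Finsupp.sum_single]
      rw [← Finsupp.single_sum, hsum, Finsupp.single_zero, sub_zero]
    rw [hdecomp]
    refine Submodule.sum_mem _ fun g _ => Submodule.smul_mem _ _ ?_
    obtain ⟨w, rfl⟩ := hπ g
    exact ⟨(cayley π).path ℤ 1 w, by rw [edgeBoundary_path, walk_cayley, one_mul]⟩

lemma exact_cellBoundary (hker : π.ker = Subgroup.normalClosure {c ^ m}) :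
    Function.Exact (cellBoundary π c m) ((cayley π).edgeBoundary ℤ) := by
  have hc : c ^ m ∈ π.ker := hker.ge (Subgroup.subset_normalClosure rfl)
  refine LinearMap.exact_of_comp_eq_zero_of_ker_le_range ?_ fun z hz => ?_
  · refine Finsupp.lhom_ext' fun q => LinearMap.ext_ring ?_
    simp [cellBoundary, edgeBoundary_path_of_mem_loops ℤ ((loops_cayley π q.out).ge hc)]
  · have hspan := mem_span_path_of_loops_eq_closure (exists_walk_cayley_eq hπ) (c := c ^ m)
      (T := Set.univ) (by rw [loops_cayley, hker, normalClosure_singleton_eq_closure,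
        Set.image_univ]) hz
    refine Submodule.span_le.2 ?_ hspan
    rintro _ ⟨u, -, rfl⟩
    exact ⟨_, cellBoundary_single hc _⟩

lemma injective_cellBoundary {Λ : Type*} [LinearOrder Λ] {L : ℕ} [NeZero L]
    (W : StackedWord α L Λ) (hm : m ≠ 0)
    (hker : π.ker = Subgroup.normalClosure {W.letter.segment 0 L ^ m}) :
    Function.Injective (cellBoundary π (W.letter.segment 0 L) m) := by
  refine W.linearIndependent_path_cayley hm hπ hker fun q q' s h => ?_
  rw [← QuotientGroup.out_eq' q, ← QuotientGroup.out_eq' q', ← h]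
  exact (QuotientGroup.mk_mul_of_mem _ (pow_mem (Subgroup.mem_zpowers _) s)).symm

end Exactness

section Orbits

variable {H : Type*} [Group H] {ψ : G →* H}

lemma prodMap_eq_iff_mem_orbit_ker (e e' : G × α) :
    Prod.map ψ id e = Prod.map ψ id e' ↔ e ∈ MulAction.orbit ψ.ker e' := by
  obtain ⟨x, a⟩ := e
  obtain ⟨y, b⟩ := e'
  rw [Prod.map_apply, Prod.map_apply, Prod.mk.injEq, eq_iff_mem_orbit_ker]
  constructor
  · rintro ⟨⟨k, rfl⟩, rfl⟩
    exact ⟨k, rfl⟩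
  · rintro ⟨k, h⟩
    exact ⟨⟨k, congrArg Prod.fst h⟩, (congrArg Prod.snd h).symm⟩

lemma isCancelSMul_edge (K : Subgroup G) : IsCancelSMul K (G × α) :=
  isCancelSMul_iff_eq_one_of_smul_eq.2 fun _ e h =>
    Subtype.ext (mul_eq_right.1 (congrArg Prod.fst h : _ * e.1 = e.1))

end Orbits

end RoseCover

namespace StackedWord

attribute [local instance] RoseCover.edgeMulAction RoseCover.isCancelSMul_edge

variable {n m L : ℕ} {G H Λ : Type} [Group G] [Group H] [Finite H] [LinearOrder Λ] [NeZero L]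
  {π : FreeGroup (Fin n) →* G} {ψ : G →* H}

/-- The Cayley complex of a one-relator presentation is contractible, and a normal subgroup of
finite index that meets the powers of the root trivially acts freely on it. -/
lemma hasFreeResOfRanks_ker (W : StackedWord (Fin n) L Λ) (hπ : Function.Surjective π)
    (hker : π.ker = Subgroup.normalClosure {W.letter.segment 0 L ^ m}) (hm : m ≠ 0)
    (hψ : Function.Surjective ψ) (hord : orderOf (ψ (π (W.letter.segment 0 L))) = m) :
    HasFreeResOfRanks ψ.ker 2 fun
      | 0 => Nat.card H
      | 1 => Nat.card H * n
      | 2 => Nat.card (H ⧸ (Subgroup.zpowers (π (W.letter.segment 0 L))).map ψ)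
      | _ => 0 := by
  set c := W.letter.segment 0 L
  have hc : c ^ m ∈ π.ker := hker.ge (Subgroup.subset_normalClosure rfl)
  have := isCancelSMul_ker_quotient (disjoint_zpowers_ker (ψ := ψ) (g := π c)
    (by rw [hord, ← map_pow, MonoidHom.mem_ker.1 hc]))
  let e₀ := orbitsEquiv hψ eq_iff_mem_orbit_ker
  let e₁ := orbitsEquiv (hψ.prodMap Function.surjective_id)
    (RoseCover.prodMap_eq_iff_mem_orbit_ker (α := Fin n))
  let e₂ := orbitsEquiv (cosetMap_surjective hψ)
    (cosetMap_eq_iff_mem_orbit_ker (C := Subgroup.zpowers (π c)))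
  have := Finite.of_equiv _ e₀.symm
  have := Finite.of_equiv _ e₁.symm
  have := Finite.of_equiv _ e₂.symm
  have hres := HasFreeResOfRanks.of_exact (K := ψ.ker)
    (fun k => RoseCover.edgeBoundary_cayley_smul π (k : G))
    (fun k => RoseCover.cellBoundary_smul hc (k : G)) (RoseCover.exact_edgeBoundary_cayley hπ)
    (RoseCover.exact_cellBoundary hπ hker) (RoseCover.injective_cellBoundary hπ W hm hker)
  rwa [Nat.card_congr e₀, Nat.card_congr e₁, Nat.card_congr e₂, Nat.card_prod, Nat.card_fin]
    at hres

theorem eulerCharRel (W : StackedWord (Fin n) L Λ) (hπ : Function.Surjective π)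
    (hker : π.ker = Subgroup.normalClosure {W.letter.segment 0 L ^ m}) (hm : m ≠ 0)
    (hψ : Function.Surjective ψ) (hord : orderOf (ψ (π (W.letter.segment 0 L))) = m) :
    EulerCharRel G (1 - (n : ℚ) + 1 / (m : ℚ)) := by
  have hindex : ψ.ker.index = Nat.card H := by
    rw [Subgroup.index_ker, MonoidHom.range_eq_top.2 hψ, Subgroup.card_top]
  have hcard := card_eq_card_quotient_map_zpowers_mul_orderOf (ψ := ψ) (π (W.letter.segment 0 L))
  refine ⟨ψ.ker, 2, _, hindex ▸ Nat.card_pos.ne', W.hasFreeResOfRanks_ker hπ hker hm hψ hord, ?_⟩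
  simp only [Finset.sum_range_succ, Finset.sum_range_zero, hindex]
  rw [hord] at hcard
  set q := Nat.card (H ⧸ (Subgroup.zpowers (π (W.letter.segment 0 L))).map ψ)
  have hq : (q : ℚ) ≠ 0 := Nat.cast_ne_zero.2 Nat.card_pos.ne'
  have hm' : (m : ℚ) ≠ 0 := Nat.cast_ne_zero.2 hm
  rw [hcard]
  push_cast
  field_simp
  ring

end StackedWord

theorem eulerCharRel_presentedGroup {n m : ℕ} (hm : m ≠ 0) {r : FreeGroup (Fin n)}
    (hr : ¬ ∃ (s : FreeGroup (Fin n)) (k : ℕ), 2 ≤ k ∧ r = s ^ k) :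
    EulerCharRel (PresentedGroup ({r ^ m} : Set (FreeGroup (Fin n))))
      (1 - (n : ℚ) + 1 / (m : ℚ)) := by
  obtain ⟨L, _, _, W, g, hg⟩ := StackedWord.exists_conj_segment hr
  set c := W.letter.segment 0 L
  have hc : c ≠ 1 := by
    intro h
    exact hr ⟨1, 2, le_rfl, by simp [hg, h]⟩
  obtain ⟨H, _, _, φ, hφ⟩ := MagnusPattern.exists_finite_orderOf_eq hc hm
  have hclosure : Subgroup.normalClosure {r ^ m} = Subgroup.normalClosure {c ^ m} := by
    rw [hg, conj_pow, normalClosure_singleton_conj]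
  have hφr : Subgroup.normalClosure {r ^ m} ≤ φ.ker := by
    rw [hclosure]
    refine Subgroup.normalClosure_le_normal (Set.singleton_subset_iff.2 ?_)
    rw [SetLike.mem_coe, MonoidHom.mem_ker, map_pow, ← hφ, pow_orderOf_eq_one]
  let ψ : PresentedGroup ({r ^ m} : Set (FreeGroup (Fin n))) →* H := QuotientGroup.lift _ φ hφr
  refine W.eulerCharRel (PresentedGroup.mk_surjective _)
    ((QuotientGroup.ker_mk' _).trans hclosure) hm ψ.rangeRestrict_surjective ?_
  rw [← Subgroup.orderOf_coe]
  exact hφ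

/-- A one-relator group `G = ⟨g₁, …, g_n ∣ r^m⟩` with `n ≥ 1`, `m ≥ 1` and `r` not a
proper power has Euler characteristic `χ(G) = 1 − n + 1/m`.  Consequently, if `n ≥ 2`
then `χ(G) ≤ 0`, with `χ(G) = 0` if and only if `n = 2` and `m = 1`. -/
theorem eulerChar_oneRelator (n m : ℕ) (hn : 1 ≤ n) (hm : 1 ≤ m)
    (r : FreeGroup (Fin n))
    (hr : ¬ ∃ (s : FreeGroup (Fin n)) (k : ℕ), 2 ≤ k ∧ r = s ^ k) :
    EulerCharRel (PresentedGroup ({r ^ m} : Set (FreeGroup (Fin n))))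
      (1 - (n : ℚ) + 1 / (m : ℚ)) ∧
    (2 ≤ n → (1 - (n : ℚ) + 1 / (m : ℚ) ≤ 0 ∧
      ((1 - (n : ℚ) + 1 / (m : ℚ) = 0) ↔ n = 2 ∧ m = 1))) := by
  refine ⟨eulerCharRel_presentedGroup (Nat.one_le_iff_ne_zero.1 hm) hr, fun h2 => ?_⟩
  have hn2 : (2 : ℚ) ≤ n := by exact_mod_cast h2
  have hm1 : (1 : ℚ) ≤ m := by exact_mod_cast hm
  have hdiv : 1 / (m : ℚ) ≤ 1 := (div_le_one (by linarith)).2 hm1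
  refine ⟨by linarith, fun h => ?_, ?_⟩
  · have hn' : (n : ℚ) = 2 := by linarith
    have hm' : 1 / (m : ℚ) = 1 := by linarith
    rw [one_div, inv_eq_one] at hm'
    exact ⟨by exact_mod_cast hn', by exact_mod_cast hm'⟩
  · rintro ⟨rfl, rfl⟩
    norm_num
end

section
/- Let R be a PID and C_•, D_• chain complexes of free R-modules. Then for each k there is a split short exact sequence 0 → ⊕_{i+j=k} H_i(C_•) ⊗_R H_j(D_•) → H_k(C_• ⊗ D_•) → ⊕_{i+j=k−1} Tor₁^R(H_i(C_•), H_j(D_•)) → 0. -/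
open CategoryTheory DirectSum

open scoped TensorProduct

/-!
Over a hereditary ring, a complex `C` of projective modules maps onto its homology `H(C)`, regarded
as a complex with zero differential, by a quasi-isomorphism: the cycles are direct summands of the
terms, so the projections onto homology extend to all chains. The kernel of this map is an acyclic
complex of projectives, hence contractible, and therefore `C ⊗ D ⟶ H(C) ⊗ D` is again a
quasi-isomorphism when `D` is flat. Up to signs, `H(C) ⊗ D` is the direct sum of shifts of the
complexes `Hᵢ(C) ⊗ D`, whose homology is given by the split universal coefficient theorem.
-/

open Limits

universe u v w

section Hereditary

theorem baer_of_surjective_of_projective_ideals {R : Type*} [Ring R]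
    (hR : ∀ I : Ideal R, Module.Projective R I) {M N : Type*} [AddCommGroup M] [Module R M]
    [AddCommGroup N] [Module R N] (hM : Module.Baer R M) (f : M →ₗ[R] N)
    (hf : Function.Surjective f) : Module.Baer R N := by
  intro I φ
  have := hR I
  obtain ⟨ψ, hψ⟩ := Module.projective_lifting_property f φ hf
  obtain ⟨ψ', hψ'⟩ := hM I ψ
  refine ⟨f ∘ₗ ψ', fun x hx ↦ ?_⟩
  rw [LinearMap.comp_apply, hψ' x hx, ← hψ, LinearMap.comp_apply]

theorem injective_of_epi_of_projective_ideals {R : Type u} [Ring R]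
    (hR : ∀ I : Ideal R, Module.Projective R I) {M N : ModuleCat.{u} R} (f : M ⟶ N) [Epi f]
    [Injective M] : Injective N := by
  rw [← Module.injective_iff_injective_object, ← Module.Baer.iff_injective]
  exact baer_of_surjective_of_projective_ideals hR
    (Module.Baer.of_injective (Module.injective_module_of_injective_object R M)) f.hom
    ((ModuleCat.epi_iff_surjective f).1 ‹_›)

theorem hasProjectiveDimensionLE_one_of_projective_ideals {R : Type u} [Ring R]
    (hR : ∀ I : Ideal R, Module.Projective R I) (M : ModuleCat.{u} R) :
    HasProjectiveDimensionLE M 1 := by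
  let := HasExt.standard (ModuleCat.{u} R)
  refine hasProjectiveDimensionLT_of_enoughInjectives M 2 fun N ↦ ?_
  have hS : (ShortComplex.mk _ _ (cokernel.condition (Injective.ι N))).ShortExact :=
    { exact := ShortComplex.exact_cokernel (Injective.ι N) }
  have : Injective (cokernel (Injective.ι N)) :=
    injective_of_epi_of_projective_ideals hR (cokernel.π (Injective.ι N))
  have : HasInjectiveDimensionLT N 2 :=
    hS.hasInjectiveDimensionLT_X₁ 1 (by dsimp; infer_instance) (by dsimp; infer_instance)
  exact HasInjectiveDimensionLT.subsingleton N 2 2 le_rfl M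

variable {𝒜 : Type u} [Category.{v} 𝒜] [Abelian 𝒜] [∀ X : 𝒜, HasProjectiveDimensionLE X 1]

theorem projective_of_mono {X Y : 𝒜} (f : X ⟶ Y) [Mono f] [Projective Y] : Projective X := by
  have hS : (ShortComplex.mk _ _ (cokernel.condition f)).ShortExact :=
    { exact := ShortComplex.exact_cokernel f }
  have := hS.hasProjectiveDimensionLT_X₁ 1 (by dsimp; infer_instance) (by dsimp; infer_instance)
  exact projective_iff_hasProjectiveDimensionLT_one.2 this

end Hereditary

section Contraction

variable {𝒜 : Type u} [Category.{v} 𝒜] [Abelian 𝒜]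

theorem iCycles_comp_toCycles {ι : Type*} {c : ComplexShape ι} (K : HomologicalComplex 𝒜 c)
    (i j : ι) : K.iCycles i ≫ K.toCycles i j = 0 := by
  simp [← cancel_mono (K.iCycles j)]

theorem shortExact_iCycles_toCycles_of_exactAt {ι : Type*} {c : ComplexShape ι}
    (K : HomologicalComplex 𝒜 c) {i j : ι} (hij : c.Rel i j) (hK : K.ExactAt j) :
    (ShortComplex.mk _ _ (iCycles_comp_toCycles K i j)).ShortExact where
  exact := ShortComplex.exact_of_f_is_kernel _ <|
    (isKernelOfComp _ _ (K.cyclesIsKernel i j (c.next_eq' hij)) _ (K.toCycles_i i j))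
  epi_g := Preadditive.epi_of_isZero_cokernel' _
    (K.homologyIsCokernel i j (c.prev_eq' hij)) hK.isZero_homology

theorem nonempty_contraction_of_acyclic_of_projective
    [∀ X : 𝒜, HasProjectiveDimensionLE X 1] (K : ChainComplex 𝒜 ℤ)
    [∀ i, Projective (K.X i)] (hK : K.Acyclic) : Nonempty (Homotopy (𝟙 K) 0) := by
  have hcycles (i : ℤ) : Projective (K.cycles i) := projective_of_mono (K.iCycles i)
  let σ (i j : ℤ) (hij : (ComplexShape.down ℤ).Rel i j) :=
    (shortExact_iCycles_toCycles_of_exactAt K hij (hK j)).splittingOfProjective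
  have hs (i j : ℤ) (hij) : (σ i j hij).s ≫ K.d i j = K.iCycles j := by
    rw [← K.toCycles_i i j]
    exact (σ i j hij).s_g_assoc _
  have hr (i j k : ℤ) (hjk) : K.d i j ≫ (σ j k hjk).r = K.toCycles i j := by
    rw [← K.toCycles_i i j, Category.assoc]
    exact (congrArg _ (σ j k hjk).f_r).trans (Category.comp_id _)
  have hnext (i : ℤ) : (ComplexShape.down ℤ).Rel i (i - 1) := sub_add_cancel i 1
  let h (i j : ℤ) (hji : (ComplexShape.down ℤ).Rel j i) : K.X i ⟶ K.X j :=
    (σ i (i - 1) (hnext i)).r ≫ (σ j i hji).s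
  have hid : Homotopy.nullHomotopicMap' h = 𝟙 K := by
    ext j
    rw [Homotopy.nullHomotopicMap'_f (k₂ := j + 1) rfl (hnext j), HomologicalComplex.id_f,
      ← (σ j (j - 1) (hnext j)).id, add_comm]
    dsimp only [h]
    rw [Category.assoc, hs _ _ rfl, reassoc_of% hr _ _ _ (hnext (j - 1))]
  exact ⟨(Homotopy.ofEq hid.symm).trans (Homotopy.nullHomotopy' h)⟩

end Contraction

section Formality

variable {𝒜 : Type u} [Category.{v} 𝒜] [Abelian 𝒜] {ι : Type*} {c : ComplexShape ι}

/-- The homology of `K`, regarded as a complex with zero differential. -/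
@[simps]
noncomputable abbrev homologyComplex (K : HomologicalComplex 𝒜 c) : HomologicalComplex 𝒜 c where
  X i := K.homology i
  d _ _ := 0

theorem exists_retraction_iCycles [∀ X : 𝒜, HasProjectiveDimensionLE X 1]
    (K : HomologicalComplex 𝒜 c) (i : ι) [∀ j, Projective (K.X j)] :
    ∃ r : K.X i ⟶ K.cycles i, K.iCycles i ≫ r = 𝟙 _ := by
  let p := Abelian.factorThruImage (K.d i (c.next i))
  have hp : p ≫ Abelian.image.ι (K.d i (c.next i)) = K.d i (c.next i) :=
    Abelian.image.fac (K.d i (c.next i))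
  have hzero : K.iCycles i ≫ p = 0 := by
    rw [← cancel_mono (Abelian.image.ι (K.d i (c.next i))), Category.assoc, hp, K.iCycles_d,
      zero_comp]
  have hS : (ShortComplex.mk (K.iCycles i) p hzero).ShortExact :=
    { exact := ShortComplex.exact_of_f_is_kernel _
        (isKernelOfComp _ _ (K.cyclesIsKernel i _ rfl) _ hp)
      epi_g := by dsimp [p]; infer_instance }
  have : Projective (Abelian.image (K.d i (c.next i))) := projective_of_mono (Abelian.image.ι _)
  exact ⟨hS.splittingOfProjective.r, hS.splittingOfProjective.f_r⟩

theorem quasiIso_of_iCycles_comp_eq_homologyπ {K : HomologicalComplex 𝒜 c}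
    (π : K ⟶ homologyComplex K) (hπ : ∀ i, K.iCycles i ≫ π.f i = K.homologyπ i) :
    QuasiIso π := by
  refine ⟨fun i ↦ ?_⟩
  rw [quasiIsoAt_iff_isIso_homologyMap]
  let L := homologyComplex K
  have : IsIso (L.iCycles i) := L.isIso_iCycles i _ rfl rfl
  have : IsIso (L.homologyπ i) := L.isIso_homologyπ _ i rfl rfl
  have hid : HomologicalComplex.homologyMap π i ≫ inv (L.homologyπ i) ≫ L.iCycles i = 𝟙 _ := by
    rw [← cancel_epi (K.homologyπ i), HomologicalComplex.homologyπ_naturality_assoc,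
      IsIso.hom_inv_id_assoc, HomologicalComplex.cyclesMap_i, hπ, Category.comp_id]
  exact IsIso.of_isIso_fac_right hid

theorem exists_quasiIso_homologyComplex [∀ X : 𝒜, HasProjectiveDimensionLE X 1]
    (K : HomologicalComplex 𝒜 c) [∀ i, Projective (K.X i)] :
    ∃ π : K ⟶ homologyComplex K, (∀ i, Epi (π.f i)) ∧ QuasiIso π := by
  choose r hr using exists_retraction_iCycles K
  let π : K ⟶ homologyComplex K :=
    { f i := r i ≫ K.homologyπ i
      comm' i j _ := by
        rw [homologyComplex_d, comp_zero, ← K.toCycles_i i j, Category.assoc,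
          reassoc_of% hr j, K.toCycles_comp_homologyπ] }
  refine ⟨π, fun i ↦ ?_, quasiIso_of_iCycles_comp_eq_homologyπ π fun i ↦ ?_⟩
  · have : IsSplitEpi (r i) := ⟨⟨K.iCycles i, hr i⟩⟩
    exact epi_comp (r i) (K.homologyπ i)
  · exact (reassoc_of% hr i) _

theorem nonempty_contraction_kernel [∀ X : 𝒜, HasProjectiveDimensionLE X 1]
    {K L : ChainComplex 𝒜 ℤ} [∀ i, Projective (K.X i)]
    (π : K ⟶ L) [∀ i, Epi (π.f i)] [QuasiIso π] :
    Nonempty (Homotopy (𝟙 (kernel π)) 0) := by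
  have : Epi π := HomologicalComplex.epi_of_epi_f π inferInstance
  have hS : (ShortComplex.mk _ _ (kernel.condition π)).ShortExact :=
    { exact := ShortComplex.exact_kernel π }
  have (i : ℤ) : Projective ((kernel π).X i) := projective_of_mono ((kernel.ι π).f i)
  exact nonempty_contraction_of_acyclic_of_projective _ (hS.acyclic_X₁ ‹_›)

end Formality

section DerivedFunctor

variable {𝒜 : Type u} [Category.{v} 𝒜] [Abelian 𝒜]

/-- A short exact sequence `0 ⟶ X₁ ⟶ X₂ ⟶ X₃ ⟶ 0` with `X₁`, `X₂` projective, regarded as a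
projective resolution of `X₃`; the complex is obtained by placing `X₂` below `X₁`. -/
noncomputable def twoTermResolution {S : ShortComplex 𝒜} (hS : S.ShortExact) [Projective S.X₁]
    [Projective S.X₂] : ProjectiveResolution S.X₃ where
  complex := ((ChainComplex.single₀ 𝒜).obj S.X₁).augment S.f zero_comp
  π := (ChainComplex.toSingle₀Equiv _ _).symm ⟨S.g, S.zero⟩
  projective
    | 0 => ‹Projective S.X₂›
    | 1 => ‹Projective S.X₁›
    | n + 2 =>
      (HomologicalComplex.isZero_single_obj_X (ComplexShape.down ℕ) 0 S.X₁ (n + 1)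
        n.succ_ne_zero).projective
  quasiIso := ⟨fun n ↦ by
    have hzero (n : ℕ) : IsZero (((ChainComplex.single₀ 𝒜).obj S.X₁).X (n + 1)) :=
      HomologicalComplex.isZero_single_obj_X _ 0 S.X₁ (n + 1) n.succ_ne_zero
    match n with
    | 0 =>
      rw [ChainComplex.quasiIsoAt₀_iff, ShortComplex.quasiIso_iff_of_zeros' _ rfl rfl rfl]
      have hπ := ChainComplex.toSingle₀Equiv_symm_apply_f_zero
        (C := ((ChainComplex.single₀ 𝒜).obj S.X₁).augment S.f zero_comp) S.g S.zero
      have hexact (g : S.X₂ ⟶ S.X₃) (hg : g = S.g) (w : S.f ≫ g = 0) :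
          (ShortComplex.mk S.f g w).Exact ∧ Epi g := by
        subst hg
        exact ⟨hS.exact, hS.epi_g⟩
      exact hexact _ hπ _
    | 1 =>
      rw [quasiIsoAt_iff_exactAt' _ _ (ChainComplex.exactAt_succ_single_obj ..),
        HomologicalComplex.exactAt_iff' _ 2 1 0 (by simp) (by simp),
        ShortComplex.exact_iff_mono _ ((hzero 0).eq_of_src _ _)]
      exact hS.mono_f
    | n + 2 =>
      rw [quasiIsoAt_iff_exactAt' _ _ (ChainComplex.exactAt_succ_single_obj ..),
        HomologicalComplex.exactAt_iff' _ (n + 3) (n + 2) (n + 1) (by simp) (by simp)]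
      exact ShortComplex.exact_of_isZero_X₂ _ (hzero n)⟩

variable [HasProjectiveResolutions 𝒜] {ℬ : Type w} [Category.{v} ℬ] [Abelian ℬ]

/-- The first left derived functor computed by `twoTermResolution`. -/
noncomputable def leftDerivedOneIsoKernel (F : 𝒜 ⥤ ℬ) [F.Additive] {S : ShortComplex 𝒜}
    (hS : S.ShortExact) [Projective S.X₁] [Projective S.X₂] :
    (F.leftDerived 1).obj S.X₃ ≅ kernel (F.map S.f) :=
  let K := (F.mapHomologicalComplex _).obj (twoTermResolution hS).complex
  have hzero : IsZero (K.X 2) :=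
    F.map_isZero (HomologicalComplex.isZero_single_obj_X (ComplexShape.down ℕ) 0 S.X₁ 1
      one_ne_zero)
  let e : K.cycles 1 ≅ kernel (K.d 1 0) :=
    (K.cyclesIsKernel 1 0 (by simp)).conePointUniqueUpToIso (limit.isLimit _)
  (twoTermResolution hS).isoLeftDerivedObj F 1 ≪≫
    (K.isoHomologyπ 2 1 (by simp) (hzero.eq_of_src _ _)).symm ≪≫ e

end DerivedFunctor

section UniversalCoefficient

variable {ℬ : Type w} [Category.{v} ℬ] [Abelian ℬ]

theorem splitting_biprodDesc_comp {S : ShortComplex ℬ} (σ : S.Splitting) {Y : ℬ} (u : S.X₃ ⟶ Y) :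
    biprod.desc S.f (kernel.ι u ≫ σ.s) ≫ S.g ≫ u = 0 := by
  ext <;> simp

/-- If `σ` splits `0 ⟶ X₁ ⟶ X₂ ⟶ X₃ ⟶ 0`, the kernel of a morphism `X₂ ⟶ X₃ ⟶ Y` is the sum of
`X₁` and the kernel of `X₃ ⟶ Y`. -/
noncomputable def isLimitKernelForkOfSplitting {S : ShortComplex ℬ} (σ : S.Splitting) {Y : ℬ}
    (u : S.X₃ ⟶ Y) : IsLimit (KernelFork.ofι _ (splitting_biprodDesc_comp σ u)) :=
  have hr : biprod.desc S.f (kernel.ι u ≫ σ.s) ≫ σ.r = biprod.fst := by ext <;> simp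
  have hg : biprod.desc S.f (kernel.ι u ≫ σ.s) ≫ S.g = biprod.snd ≫ kernel.ι u := by ext <;> simp
  KernelFork.IsLimit.ofι _ _
    (fun k hk ↦ biprod.lift (k ≫ σ.r) (kernel.lift u (k ≫ S.g) (by simpa using hk)))
    (fun k hk ↦ by simp [← Preadditive.comp_add, σ.id])
    (fun k hk m hm ↦ by
      subst hm
      ext <;> simp [hr, hg])

/-- The right homology data of `S` when `S.g` factors as `p ≫ T.g ≫ u ≫ v` with `p` a cokernel of
`S.f`, `T` split and `v` a monomorphism. -/
noncomputable def rightHomologyDataOfSplitting {S T : ShortComplex ℬ} (σ : T.Splitting)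
    {p : S.X₂ ⟶ T.X₂} (wp : S.f ≫ p = 0) (hp : IsColimit (CokernelCofork.ofπ p wp)) {Y : ℬ}
    (u : T.X₃ ⟶ Y) (v : Y ⟶ S.X₃) (hv : Mono v) (fac : p ≫ T.g ≫ u ≫ v = S.g) :
    S.RightHomologyData :=
  have hdesc : hp.desc (CokernelCofork.ofπ S.g S.zero) = (T.g ≫ u) ≫ v :=
    Cofork.IsColimit.hom_ext hp ((Cofork.IsColimit.π_desc hp).trans (by simp [fac]))
  { Q := T.X₂
    H := T.X₁ ⊞ kernel u
    p := p
    ι := biprod.desc T.f (kernel.ι u ≫ σ.s)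
    wp := wp
    hp := hp
    wι := by simpa [hdesc] using splitting_biprodDesc_comp σ u =≫ v
    hι := isKernelCompMono (isLimitKernelForkOfSplitting σ u) v hdesc }

/-- The sequence `Hᵢ ⟶ Kᵢ / im d ⟶ Bⱼ`, where the boundaries `Bⱼ` are encoded as the kernel of
`K.cycles j ⟶ K.homology j`. -/
noncomputable abbrev homologyOpcyclesBoundaries {ι : Type*} {c : ComplexShape ι}
    (K : HomologicalComplex ℬ c) (i j : ι) : ShortComplex ℬ where
  X₁ := K.homology i
  X₂ := K.opcycles i
  X₃ := kernel (K.homologyπ j)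
  f := K.homologyι i
  g := kernel.lift _ (K.opcyclesToCycles i j) (K.opcyclesToCycles_homologyπ i j)
  zero := by simp [← cancel_mono (kernel.ι _)]

theorem shortExact_homologyOpcyclesBoundaries {ι : Type*} {c : ComplexShape ι}
    (K : HomologicalComplex ℬ c) {i j : ι} (hij : c.Rel i j) :
    (homologyOpcyclesBoundaries K i j).ShortExact where
  exact := ShortComplex.exact_of_f_is_kernel _ <|
    isKernelOfComp (kernel.ι (K.homologyπ j) ≫ K.iCycles j) _
      (K.homologyIsKernel i j (c.next_eq' hij)) _ (by simp)
  epi_g := ((HomologicalComplex.HomologySequence.composableArrows₃_exact K i j hij).exact 1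
    ).epi_kernelLift

variable {𝒜 : Type u} [Category.{v} 𝒜] [Abelian 𝒜] [∀ X : 𝒜, HasProjectiveDimensionLE X 1]
  {ι : Type*} {c : ComplexShape ι}

theorem nonempty_homology_mapHomologicalComplex_iso [HasProjectiveResolutions 𝒜] (F : 𝒜 ⥤ ℬ)
    [F.Additive] [PreservesFiniteColimits F] (K : HomologicalComplex 𝒜 c)
    [∀ i, Projective (K.X i)] {i j : ι} (hij : c.Rel i j) :
    Nonempty (((F.mapHomologicalComplex c).obj K).homology i ≅
      F.obj (K.homology i) ⊞ (F.leftDerived 1).obj (K.homology j)) := by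
  obtain rfl := c.next_eq' hij
  have hcycles : Projective (K.cycles (c.next i)) := projective_of_mono (K.iCycles (c.next i))
  have hboundaries : Projective (kernel (K.homologyπ (c.next i))) := projective_of_mono (kernel.ι _)
  have hB : (ShortComplex.mk _ _ (kernel.condition (K.homologyπ (c.next i)))).ShortExact :=
    { exact := ShortComplex.exact_kernel _ }
  let σ := (shortExact_homologyOpcyclesBoundaries K hij).splittingOfProjective.map F
  obtain ⟨r, hr⟩ := exists_retraction_iCycles K (c.next i)
  have hmono : Mono (F.map (K.iCycles (c.next i))) := by
    have : IsSplitMono (K.iCycles (c.next i)) := ⟨⟨r, hr⟩⟩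
    infer_instance
  have hfac : F.map (K.pOpcycles i) ≫ F.map (homologyOpcyclesBoundaries K i (c.next i)).g ≫
      F.map (kernel.ι (K.homologyπ (c.next i))) ≫ F.map (K.iCycles (c.next i)) =
      F.map (K.d i (c.next i)) := by
    simp only [← F.map_comp, kernel.lift_ι_assoc, K.opcyclesToCycles_iCycles, K.p_fromOpcycles]
  let h : ((K.sc i).map F).RightHomologyData :=
    rightHomologyDataOfSplitting σ ((CokernelCofork.ofπ _ (K.d_pOpcycles _ i)).map_condition F)
      (CokernelCofork.mapIsColimit _ (K.opcyclesIsCokernel _ i rfl) F) _ _ hmono hfac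
  exact ⟨h.homologyIso ≪≫ biprod.mapIso (Iso.refl (F.obj (K.homology i)))
    (leftDerivedOneIsoKernel F hB).symm⟩

end UniversalCoefficient

section DirectSum

variable {R : Type u} [Ring R] {ι : Type v}

theorem exact_lmap {M N P : ι → Type*} [∀ i, AddCommGroup (M i)] [∀ i, AddCommGroup (N i)]
    [∀ i, AddCommGroup (P i)] [∀ i, Module R (M i)] [∀ i, Module R (N i)] [∀ i, Module R (P i)]
    {f : ∀ i, M i →ₗ[R] N i} {g : ∀ i, N i →ₗ[R] P i} (h : ∀ i, Function.Exact (f i) (g i)) :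
    Function.Exact (lmap f) (lmap g) := by
  simp only [LinearMap.exact_iff, ker_lmap, range_lmap, LinearMap.exact_iff.1 (h _)]

/-- The direct sum of a family of short complexes of modules. -/
noncomputable abbrev directSumShortComplex (S : ι → ShortComplex (ModuleCat.{max v w} R)) :
    ShortComplex (ModuleCat.{max v w} R) where
  X₁ := ModuleCat.of R (⨁ i, (S i).X₁)
  X₂ := ModuleCat.of R (⨁ i, (S i).X₂)
  X₃ := ModuleCat.of R (⨁ i, (S i).X₃)
  f := ModuleCat.ofHom (lmap fun i ↦ (S i).f.hom)
  g := ModuleCat.ofHom (lmap fun i ↦ (S i).g.hom)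
  zero := by
    classical
    refine ModuleCat.hom_ext (linearMap_ext R fun i ↦ LinearMap.ext fun x ↦ ?_)
    have hx : (S i).g ((S i).f x) = 0 := ConcreteCategory.congr_hom (S i).zero x
    simp [lmap_lof, hx]

theorem directSumShortComplex_exact {S : ι → ShortComplex (ModuleCat.{max v w} R)}
    (h : ∀ i, (S i).Exact) : (directSumShortComplex S).Exact :=
  (ShortComplex.ShortExact.moduleCat_exact_iff_function_exact _).2 <| exact_lmap fun i ↦
    (ShortComplex.ShortExact.moduleCat_exact_iff_function_exact _).1 (h i)

theorem directSumShortComplex_shortExact {S : ι → ShortComplex (ModuleCat.{max v w} R)}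
    (h : ∀ i, (S i).ShortExact) : (directSumShortComplex S).ShortExact where
  exact := directSumShortComplex_exact fun i ↦ (h i).exact
  mono_f := (ModuleCat.mono_iff_injective _).2
    ((lmap_injective _).2 fun i ↦ (h i).moduleCat_injective_f)
  epi_g := (ModuleCat.epi_iff_surjective _).2
    ((lmap_surjective _).2 fun i ↦ (h i).moduleCat_surjective_g)

/-- The homology of a direct sum of short complexes. -/
noncomputable def directSumLeftHomologyData (S : ι → ShortComplex (ModuleCat.{max v w} R)) :
    (directSumShortComplex S).LeftHomologyData :=
  let C : ShortComplex (ModuleCat.{max v w} R) :=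
    directSumShortComplex fun i ↦ ShortComplex.mk _ _ (S i).iCycles_g
  let H : ShortComplex (ModuleCat.{max v w} R) :=
    directSumShortComplex fun i ↦ ShortComplex.mk _ _ (S i).toCycles_comp_homologyπ
  have hC : C.Exact := directSumShortComplex_exact fun i ↦
    ShortComplex.exact_of_f_is_kernel _ (S i).cyclesIsKernel
  have hH : H.Exact := directSumShortComplex_exact fun i ↦
    ShortComplex.exact_of_g_is_cokernel _ (S i).homologyIsCokernel
  have : Mono C.f := (ModuleCat.mono_iff_injective _).2 <|
    (lmap_injective _).2 fun i ↦ (ModuleCat.mono_iff_injective (S i).iCycles).1 inferInstance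
  have : Epi H.g := (ModuleCat.epi_iff_surjective _).2 <|
    (lmap_surjective _).2 fun i ↦ (ModuleCat.epi_iff_surjective (S i).homologyπ).1 inferInstance
  have hf : H.f ≫ C.f = (directSumShortComplex S).f := by
    dsimp only [H, C, directSumShortComplex]
    rw [← ModuleCat.ofHom_comp, ← lmap_comp]
    congr with i
    exact ConcreteCategory.congr_hom (S i).toCycles_i _
  have hlift : hC.fIsKernel.lift (KernelFork.ofι _ (directSumShortComplex S).zero) = H.f :=
    Fork.IsLimit.hom_ext hC.fIsKernel ((Fork.IsLimit.lift_ι hC.fIsKernel).trans hf.symm)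
  { K := C.X₁
    H := H.X₃
    i := C.f
    π := H.g
    wi := C.zero
    hi := hC.fIsKernel
    wπ := hlift ▸ H.zero
    hπ :=
      have hE : (ShortComplex.mk _ H.g (hlift ▸ H.zero)).Exact := by
        simpa only [hlift] using hH
      hE.gIsCokernel }

end DirectSum

section HomologyLinearEquiv

variable {R : Type u} [Ring R] {ι : Type*} {c : ComplexShape ι}
  {K : HomologicalComplex (ModuleCat.{v} R) c} {L : HomologicalComplex (ModuleCat.{w} R) c}

/-- A degreewise linear equivalence of complexes, possibly in different universes, induces a linear
equivalence on homology. -/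
noncomputable def homologyLinearEquiv (e : ∀ i, K.X i ≃ₗ[R] L.X i)
    (he : ∀ i j, c.Rel i j → ∀ x, L.d i j (e i x) = e j (K.d i j x)) (i : ι) :
    K.homology i ≃ₗ[R] L.homology i :=
  let α : ((ModuleCat.uliftFunctor.{w} R).mapHomologicalComplex c).obj K ≅
      ((ModuleCat.uliftFunctor.{v} R).mapHomologicalComplex c).obj L :=
    HomologicalComplex.Hom.isoOfComponents
      (fun i ↦ (ULift.moduleEquiv ≪≫ₗ e i ≪≫ₗ ULift.moduleEquiv.symm).toModuleIso)
      (fun i j hij ↦ ModuleCat.hom_ext (LinearMap.ext fun x ↦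
        congrArg ULift.up (he i j hij x.down)))
  let eK : ((K.sc i).map (ModuleCat.uliftFunctor.{w} R)).homology ≃ₗ[R] K.homology i :=
    ((K.sc i).mapHomologyIso (ModuleCat.uliftFunctor.{w} R)).toLinearEquiv ≪≫ₗ
      (ULift.moduleEquiv : ULift (K.homology i) ≃ₗ[R] K.homology i)
  let eL : ((L.sc i).map (ModuleCat.uliftFunctor.{v} R)).homology ≃ₗ[R] L.homology i :=
    ((L.sc i).mapHomologyIso (ModuleCat.uliftFunctor.{v} R)).toLinearEquiv ≪≫ₗ
      (ULift.moduleEquiv : ULift (L.homology i) ≃ₗ[R] L.homology i)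
  eK.symm ≪≫ₗ (HomologicalComplex.homologyMapIso α i).toLinearEquiv ≪≫ₗ eL

end HomologyLinearEquiv

section QuasiIso

variable {𝒜 : Type u} [Category.{v} 𝒜] [Abelian 𝒜] {ι : Type*} {c : ComplexShape ι}

open HomologicalComplex ZeroObject in
theorem quasiIso_of_shortExact_of_acyclic {S : ShortComplex (HomologicalComplex 𝒜 c)}
    (hS : S.ShortExact) (h : S.X₁.Acyclic) : QuasiIso S.g := by
  let S' := ShortComplex.mk (0 : 0 ⟶ S.X₂) (𝟙 S.X₂) zero_comp
  have hS' : S'.ShortExact := { exact := (S'.exact_iff_mono rfl).2 inferInstance }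
  let φ : S' ⟶ S :=
    { τ₁ := 0
      τ₂ := 𝟙 S.X₂
      τ₃ := S.g
      comm₁₂ := zero_comp.trans zero_comp.symm }
  have hzero (i : ι) : ExactAt (0 : HomologicalComplex 𝒜 c) i :=
    ShortComplex.exact_of_isZero_X₂ _ ((eval 𝒜 c i).map_isZero (isZero_zero _))
  exact HomologySequence.quasiIso_τ₃ φ hS' hS
    ⟨fun i ↦ (quasiIsoAt_iff_exactAt φ.τ₁ i (hzero i)).2 (h i)⟩ (by dsimp [φ]; infer_instance)

end QuasiIso

section Tensor

open HomologicalComplex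
open scoped MonoidalCategory

/-- The Koszul signs `(-1) ^ i` on chain complexes indexed by `ℤ`. -/
instance tensorSignsDownInt : ComplexShape.TensorSigns (ComplexShape.down ℤ) where
  ε' := MonoidHom.mk' Int.negOnePow Int.negOnePow_add
  rel_add p q r (hpq : q + 1 = p) := by change q + r + 1 = p + r; lia
  add_rel p q r (hpq : q + 1 = p) := by change r + q + 1 = r + p; lia
  ε'_succ := by
    rintro _ q rfl
    exact (neg_eq_iff_eq_neg.2 (Int.negOnePow_succ q)).symm

variable {R : Type u} [CommRing R] (C D : ChainComplex (ModuleCat.{u} R) ℤ)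

/-- The tensor product of chain complexes of modules: `HomologicalComplex.tensorObj`, sealed so that
its terms are not unfolded to the underlying colimits. -/
noncomputable def tensorComplex : ChainComplex (ModuleCat.{u} R) ℤ :=
  tensorObj C D

namespace tensorComplex

/-- The inclusion of the summand of bidegree `(i, j)`. -/
noncomputable def ι {i j n : ℤ} (h : i + j = n) : C.X i ⊗ D.X j ⟶ (tensorComplex C D).X n :=
  ιTensorObj C D i j n h

variable {C D}

/-- The morphism out of the tensor product determined by its restrictions to the summands. -/
noncomputable def desc {n : ℤ} {M : ModuleCat.{u} R}
    (f : ∀ i j : ℤ, i + j = n → (C.X i ⊗ D.X j ⟶ M)) : (tensorComplex C D).X n ⟶ M :=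
  mapBifunctorDesc f

theorem ι_desc {n : ℤ} {M : ModuleCat.{u} R}
    (f : ∀ i j : ℤ, i + j = n → (C.X i ⊗ D.X j ⟶ M)) {i j : ℤ} (h : i + j = n) :
    ι C D h ≫ desc f = f i j h :=
  ι_mapBifunctorDesc ..

theorem hom_ext {n : ℤ} {M : ModuleCat.{u} R} {f g : (tensorComplex C D).X n ⟶ M}
    (hfg : ∀ (i j : ℤ) (h : i + j = n), ι C D h ≫ f = ι C D h ≫ g) : f = g :=
  mapBifunctor.hom_ext hfg

theorem ι_d {i i' j j' n m : ℤ} (hi : i' + 1 = i) (hj : j' + 1 = j) (hm : m + 1 = n)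
    (h : i + j = n) :
    ι C D h ≫ (tensorComplex C D).d n m = C.d i i' ▷ D.X j ≫ ι C D (by lia) +
      i.negOnePow • C.X i ◁ D.d j j' ≫ ι C D (by lia) := by
  change ιTensorObj C D i j n h ≫ (tensorObj C D).d n m = _
  rw [mapBifunctor.d_eq, Preadditive.comp_add, mapBifunctor.ι_D₁, mapBifunctor.ι_D₂,
    mapBifunctor.d₁_eq _ _ _ _ hi _ _ (by change i' + j = m; lia),
    mapBifunctor.d₂_eq _ _ _ _ _ hj _ (by change i + j' = m; lia)]
  exact congrArg₂ _ (one_smul _ _) rfl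

variable (D) in
/-- Functoriality of the tensor product in the first variable. -/
noncomputable def mapLeft {C C' : ChainComplex (ModuleCat.{u} R) ℤ} (f : C ⟶ C') :
    tensorComplex C D ⟶ tensorComplex C' D :=
  tensorHom f (𝟙 D)

theorem ι_mapLeft {C C' : ChainComplex (ModuleCat.{u} R) ℤ} (f : C ⟶ C') {i j n : ℤ}
    (h : i + j = n) :
    ι C D h ≫ (mapLeft D f).f n = f.f i ▷ D.X j ≫ ι C' D h :=
  (ι_mapBifunctorMap ..).trans (by simp; rfl)

variable (D) in
theorem mapLeft_id (C : ChainComplex (ModuleCat.{u} R) ℤ) :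
    mapLeft D (𝟙 C) = 𝟙 (tensorComplex C D) := by
  ext n : 1
  exact hom_ext fun i j h ↦ by simp [ι_mapLeft]

variable (D) in
theorem mapLeft_zero (C C' : ChainComplex (ModuleCat.{u} R) ℤ) :
    mapLeft D (0 : C ⟶ C') = 0 := by
  ext n : 1
  exact hom_ext fun i j h ↦ by simp [ι_mapLeft]

variable (D) in
theorem mapLeft_comp {C C' C'' : ChainComplex (ModuleCat.{u} R) ℤ} (f : C ⟶ C') (g : C' ⟶ C'') :
    mapLeft D (f ≫ g) = mapLeft D f ≫ mapLeft D g := by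
  ext n : 1
  exact hom_ext fun i j h ↦ by simp [ι_mapLeft, reassoc_of% ι_mapLeft]

variable (D) in
/-- Functoriality of the tensor product on homotopies. -/
noncomputable def mapLeftHomotopy {C C' : ChainComplex (ModuleCat.{u} R) ℤ} {f g : C ⟶ C'}
    (h : Homotopy f g) : Homotopy (mapLeft D f) (mapLeft D g) :=
  mapBifunctorMapHomotopy₁ h _ _ _

variable (D) in
theorem acyclic_of_contraction (h : Homotopy (𝟙 C) 0) : (tensorComplex C D).Acyclic := fun n ↦ by
  rw [exactAt_iff_isZero_homology, IsZero.iff_id_eq_zero, ← homologyMap_id, ← mapLeft_id,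
    (mapLeftHomotopy D h).homologyMap_eq, mapLeft_zero, homologyMap_zero]

attribute [irreducible] tensorComplex

variable (C D) in
/-- The inclusion of the summand of bidegree `(i, n - i)`, as a linear map. -/
noncomputable def incl (n i : ℤ) : C.X i ⊗[R] D.X (n - i) →ₗ[R] (tensorComplex C D).X n :=
  (ι C D (by lia : i + (n - i) = n)).hom

theorem bijective_toModule_incl (n : ℤ) :
    Function.Bijective (toModule R ℤ _ (incl C D n)) := by
  let p : (tensorComplex C D).X n ⟶ ModuleCat.of R (⨁ i, C.X i ⊗[R] D.X (n - i)) :=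
    desc fun i j h ↦ C.X i ◁ (D.XIsoOfEq (by lia : j = n - i)).hom ≫
      ModuleCat.ofHom (lof R ℤ (fun i ↦ C.X i ⊗[R] D.X (n - i)) i)
  have hp (i : ℤ) : p.hom ∘ₗ incl C D n i =
      lof R ℤ (fun i ↦ C.X i ⊗[R] D.X (n - i)) i := by
    refine ModuleCat.hom_ext_iff.1 ((ι_desc _ (by lia)).trans ?_)
    rw [XIsoOfEq_rfl, Iso.refl_hom, MonoidalCategory.whiskerLeft_id, Category.id_comp]
    rfl
  have hlof (i : ℤ) (z : C.X i ⊗[R] D.X (n - i)) :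
      toModule R ℤ _ (incl C D n) (lof R ℤ (fun i ↦ C.X i ⊗[R] D.X (n - i)) i z) = incl C D n i z :=
    toModule_lof R (φ := incl C D n) i z
  have hpt : p.hom ∘ₗ toModule R ℤ _ (incl C D n) = LinearMap.id :=
    linearMap_ext R fun i ↦ LinearMap.ext fun z ↦
      (congrArg p.hom (hlof i z)).trans (LinearMap.congr_fun (hp i) z)
  have htp : p ≫ ModuleCat.ofHom (toModule R ℤ _ (incl C D n)) = 𝟙 _ :=
    hom_ext fun i j h ↦ by
      obtain rfl : j = n - i := by lia
      ext1
      refine LinearMap.ext fun z ↦ (congrArg _ (LinearMap.congr_fun (hp i) z)).trans (hlof i z)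
  exact Function.bijective_iff_has_inverse.2
    ⟨p.hom, LinearMap.congr_fun hpt, ConcreteCategory.congr_hom htp⟩

theorem d_incl_tmul (n i : ℤ) (x : C.X i) (y : D.X (n - i)) :
    (tensorComplex C D).d n (n - 1) (incl C D n i (x ⊗ₜ[R] y)) =
      incl C D (n - 1) (i - 1) (C.d i (i - 1) x ⊗ₜ[R]
        (eqToHom (congrArg D.X (by lia : n - i = n - 1 - (i - 1))) y)) +
      (i.negOnePow : ℤ) • incl C D (n - 1) i (x ⊗ₜ[R] D.d (n - i) (n - 1 - i) y) := by
  have h := ConcreteCategory.congr_hom (ι_d (C := C) (D := D) (by lia : i - 1 + 1 = i)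
    (by lia : n - 1 - i + 1 = n - i) (by lia : n - 1 + 1 = n) (by lia)) (x ⊗ₜ[R] y)
  have hcast {j j' : ℤ} (hj : j = j') (x : C.X (i - 1)) (y : D.X j) (h : i - 1 + j = n - 1) :
      ι C D h (x ⊗ₜ[R] y) =
        ι C D (hj ▸ h) (x ⊗ₜ[R] (eqToHom (congrArg D.X hj) y : D.X j')) := by
    subst hj
    rfl
  exact h.trans (congrArg₂ _ (hcast (by lia) (C.d i (i - 1) x) y _) rfl)

end tensorComplex

/-- `ι` exhibits `T` as the tensor product of `C` and `D`. -/
structure IsTensorComplex (C D : ChainComplex (ModuleCat.{u} R) ℤ)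
    (T : ChainComplex (ModuleCat.{v} R) ℤ)
    (ι : ∀ n i : ℤ, C.X i ⊗[R] D.X (n - i) →ₗ[R] T.X n) : Prop where
  bijective (n : ℤ) : Function.Bijective (toModule R ℤ (T.X n) (ι n))
  d_ι (n i : ℤ) (x : C.X i) (y : D.X (n - i)) :
    T.d n (n - 1) (ι n i (x ⊗ₜ[R] y)) =
      ι (n - 1) (i - 1) (C.d i (i - 1) x ⊗ₜ[R]
        (eqToHom (congrArg D.X (by lia : n - i = n - 1 - (i - 1))) y)) +
      (i.negOnePow : ℤ) • ι (n - 1) i (x ⊗ₜ[R] D.d (n - i) (n - 1 - i) y)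

namespace IsTensorComplex

theorem incl (C D : ChainComplex (ModuleCat.{u} R) ℤ) :
    IsTensorComplex C D (tensorComplex C D) (tensorComplex.incl C D) where
  bijective := tensorComplex.bijective_toModule_incl
  d_ι := tensorComplex.d_incl_tmul

variable {C D} {T : ChainComplex (ModuleCat.{v} R) ℤ} {T' : ChainComplex (ModuleCat.{w} R) ℤ}
  {ι : ∀ n i : ℤ, C.X i ⊗[R] D.X (n - i) →ₗ[R] T.X n}
  {ι' : ∀ n i : ℤ, C.X i ⊗[R] D.X (n - i) →ₗ[R] T'.X n}

/-- The terms of a tensor product complex as direct sums. -/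
noncomputable def directSumEquiv (h : IsTensorComplex C D T ι) (n : ℤ) :
    (⨁ i, C.X i ⊗[R] D.X (n - i)) ≃ₗ[R] T.X n :=
  .ofBijective _ (h.bijective n)

theorem directSumEquiv_lof (h : IsTensorComplex C D T ι) (n i : ℤ) (z : C.X i ⊗[R] D.X (n - i)) :
    h.directSumEquiv n (lof R ℤ (fun i ↦ C.X i ⊗[R] D.X (n - i)) i z) = ι n i z :=
  toModule_lof R (φ := ι n) i z

theorem linearMap_ext (h : IsTensorComplex C D T ι) {n : ℤ} {M : Type*} [AddCommMonoid M]
    [Module R M] {f g : T.X n →ₗ[R] M} (hfg : ∀ i x y, f (ι n i (x ⊗ₜ y)) = g (ι n i (x ⊗ₜ y))) :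
    f = g := by
  rw [← LinearMap.cancel_right (h.directSumEquiv n).surjective]
  ext i x y
  simpa [h.directSumEquiv_lof] using hfg i x y

/-- The comparison of the homology of two models of the tensor product, possibly in different
universes. -/
noncomputable def homologyEquiv (h : IsTensorComplex C D T ι) (h' : IsTensorComplex C D T' ι')
    (k : ℤ) : T.homology k ≃ₗ[R] T'.homology k :=
  let e (n : ℤ) : T.X n ≃ₗ[R] T'.X n := (h.directSumEquiv n).symm ≪≫ₗ h'.directSumEquiv n
  have he (n i : ℤ) (z : C.X i ⊗[R] D.X (n - i)) : e n (ι n i z) = ι' n i z := by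
    rw [← h.directSumEquiv_lof, LinearEquiv.trans_apply, LinearEquiv.symm_apply_apply,
      h'.directSumEquiv_lof]
  have hd (n : ℤ) : (T'.d n (n - 1)).hom ∘ₗ e n = (e (n - 1)).toLinearMap ∘ₗ (T.d n (n - 1)).hom :=
    h.linearMap_ext fun i x y ↦ by simp [h.d_ι, h'.d_ι, he]
  homologyLinearEquiv e (fun n m (hm : m + 1 = n) ↦ by
    obtain rfl : m = n - 1 := by lia
    exact LinearMap.congr_fun (hd n)) k

end IsTensorComplex

end Tensor

section Flat

open HomologicalComplex

variable {R : Type u} [CommRing R] {C D : ChainComplex (ModuleCat.{u} R) ℤ}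

namespace tensorComplex

theorem mapLeft_incl {C' : ChainComplex (ModuleCat.{u} R) ℤ} (f : C ⟶ C') (n i : ℤ)
    (z : C.X i ⊗[R] D.X (n - i)) :
    (mapLeft D f).f n (incl C D n i z) = incl C' D n i ((f.f i).hom.rTensor (D.X (n - i)) z) :=
  ConcreteCategory.congr_hom (ι_mapLeft f (by lia : i + (n - i) = n)) z

theorem mapLeft_directSumEquiv {C' : ChainComplex (ModuleCat.{u} R) ℤ} (f : C ⟶ C') (n : ℤ) :
    ((mapLeft D f).f n).hom ∘ₗ (IsTensorComplex.incl C D).directSumEquiv n =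
      (IsTensorComplex.incl C' D).directSumEquiv n ∘ₗ
        lmap fun i ↦ (f.f i).hom.rTensor (D.X (n - i)) := by
  refine linearMap_ext R fun i ↦ LinearMap.ext fun z ↦ ?_
  simp only [LinearMap.comp_apply, LinearEquiv.coe_coe, IsTensorComplex.directSumEquiv_lof,
    lmap_lof]
  exact mapLeft_incl f n i z

theorem shortExact_mapLeft {S : ShortComplex (ChainComplex (ModuleCat.{u} R) ℤ)}
    (hS : S.ShortExact) (D : ChainComplex (ModuleCat.{u} R) ℤ) [∀ i, Module.Flat R (D.X i)] :
    (ShortComplex.mk (mapLeft D S.f) (mapLeft D S.g)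
      (by rw [← mapLeft_comp, S.zero, mapLeft_zero])).ShortExact := by
  refine shortExact_of_degreewise_shortExact _ fun n ↦ ?_
  have h (i : ℤ) : ((S.map (eval _ _ i)).map
      (MonoidalCategory.tensorRight (D.X (n - i)))).ShortExact :=
    (hS.map_of_exact (eval _ _ i)).map_of_exact _
  exact ShortComplex.shortExact_of_iso (ShortComplex.isoMk
    ((IsTensorComplex.incl _ D).directSumEquiv n).toModuleIso
    ((IsTensorComplex.incl _ D).directSumEquiv n).toModuleIso
    ((IsTensorComplex.incl _ D).directSumEquiv n).toModuleIso
    (ModuleCat.hom_ext (mapLeft_directSumEquiv S.f n))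
    (ModuleCat.hom_ext (mapLeft_directSumEquiv S.g n)))
    (directSumShortComplex_shortExact h)

theorem quasiIso_mapLeft [∀ X : ModuleCat.{u} R, HasProjectiveDimensionLE X 1]
    {C' : ChainComplex (ModuleCat.{u} R) ℤ} [∀ i, Projective (C.X i)] (π : C ⟶ C')
    [∀ i, Epi (π.f i)] [QuasiIso π] (D : ChainComplex (ModuleCat.{u} R) ℤ)
    [∀ i, Module.Flat R (D.X i)] : QuasiIso (mapLeft D π) := by
  obtain ⟨h⟩ := nonempty_contraction_kernel π
  have : Epi π := epi_of_epi_f π inferInstance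
  have hS : (ShortComplex.mk _ _ (kernel.condition π)).ShortExact :=
    { exact := ShortComplex.exact_kernel π }
  exact quasiIso_of_shortExact_of_acyclic (shortExact_mapLeft hS D) (acyclic_of_contraction D h)

end tensorComplex

end Flat

section ZeroDifferential

variable {R : Type u} [CommRing R] {C : ChainComplex (ModuleCat.{u} R) ℤ}
  (D : ChainComplex (ModuleCat.{u} R) ℤ)

namespace tensorComplex

variable (C) in
/-- The terms of a tensor product complex as direct sums, with the sign `(-1) ^ (i * n)` on the
summand of bidegree `(i, n - i)`. These signs absorb those of `1 ⊗ d`. -/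
noncomputable def signedDirectSumEquiv (n : ℤ) :
    (⨁ i, C.X i ⊗[R] D.X (n - i)) ≃ₗ[R] (tensorComplex C D).X n :=
  congrLinearEquiv (fun i ↦ DistribMulAction.toLinearEquiv R _ (i * n).negOnePow) ≪≫ₗ
    (IsTensorComplex.incl C D).directSumEquiv n

theorem signedDirectSumEquiv_lof (n i : ℤ) (z : C.X i ⊗[R] D.X (n - i)) :
    signedDirectSumEquiv C D n (lof R ℤ (fun i ↦ C.X i ⊗[R] D.X (n - i)) i z) =
      (i * n).negOnePow • incl C D n i z := by
  rw [signedDirectSumEquiv, LinearEquiv.trans_apply, coe_congrLinearEquiv, lmap_lof,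
    IsTensorComplex.directSumEquiv_lof]
  exact map_zsmul_unit _ _ _

theorem d_comp_signedDirectSumEquiv (hC : ∀ i j, C.d i j = 0) {n m : ℤ} (h : m + 1 = n) :
    ((tensorComplex C D).d n m).hom ∘ₗ signedDirectSumEquiv C D n =
      signedDirectSumEquiv C D m ∘ₗ
        lmap fun i ↦ (D.d (n - i) (m - i)).hom.lTensor (C.X i) := by
  obtain rfl : m = n - 1 := by lia
  refine linearMap_ext R fun i ↦ TensorProduct.ext' fun x y ↦ ?_
  have hsign : (i * (n - 1)).negOnePow = (i * n).negOnePow * i.negOnePow := by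
    rw [mul_sub_one, Int.negOnePow_sub]
  have hd : (tensorComplex C D).d n (n - 1) (incl C D n i (x ⊗ₜ[R] y)) =
      i.negOnePow • incl C D (n - 1) i (x ⊗ₜ[R] D.d (n - i) (n - 1 - i) y) := by
    simp [d_incl_tmul, hC, Units.smul_def]
  simp only [LinearMap.comp_apply, LinearEquiv.coe_coe, signedDirectSumEquiv_lof, lmap_lof, hsign,
    LinearMap.lTensor_tmul, mul_smul]
  exact (map_zsmul_unit _ _ _).trans (congrArg _ hd)

/-- If the differential of `C` vanishes, `C ⊗ D` is the direct sum of the complexes `Cᵢ ⊗ D`. -/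
noncomputable def scIsoOfZero (hC : ∀ i j, C.d i j = 0) (k : ℤ) :
    directSumShortComplex (fun i ↦ (((MonoidalCategory.tensorLeft (C.X i)).mapHomologicalComplex
      _).obj D).sc' (k + 1 - i) (k - i) (k - 1 - i)) ≅
    (tensorComplex C D).sc' (k + 1) k (k - 1) :=
  ShortComplex.isoMk (signedDirectSumEquiv C D _).toModuleIso
    (signedDirectSumEquiv C D _).toModuleIso (signedDirectSumEquiv C D _).toModuleIso
    (ModuleCat.hom_ext (d_comp_signedDirectSumEquiv D hC rfl))
    (ModuleCat.hom_ext (d_comp_signedDirectSumEquiv D hC (by lia)))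

/-- The homology of `C ⊗ D` when the differential of `C` vanishes, as a direct sum. -/
noncomputable def homologyIsoOfZero (hC : ∀ i j, C.d i j = 0) (k : ℤ) :
    (tensorComplex C D).homology k ≅
      ModuleCat.of R (⨁ i, (((MonoidalCategory.tensorLeft (C.X i)).mapHomologicalComplex
        _).obj D).homology (k - i)) :=
  let K (i : ℤ) := ((MonoidalCategory.tensorLeft (C.X i)).mapHomologicalComplex _).obj D
  (tensorComplex C D).homologyIsoSc' (k + 1) k (k - 1) (by simp) (by simp) ≪≫
    ShortComplex.homologyMapIso (scIsoOfZero D hC k).symm ≪≫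
    (directSumLeftHomologyData _).homologyIso ≪≫
    (congrLinearEquiv fun i ↦ ((K i).homologyIsoSc' (k + 1 - i) (k - i) (k - 1 - i)
      (by simp; ring) (by simp; ring)).symm.toLinearEquiv).toModuleIso

end tensorComplex

end ZeroDifferential

section Kunneth

open scoped MonoidalCategory

/-- Direct sums commute with binary products. -/
def directSumProdEquiv {R : Type*} [Semiring R] {ι : Type*} (M N : ι → Type*)
    [∀ i, AddCommMonoid (M i)] [∀ i, AddCommMonoid (N i)] [∀ i, Module R (M i)]
    [∀ i, Module R (N i)] : (⨁ i, M i × N i) ≃ₗ[R] (⨁ i, M i) × ⨁ i, N i :=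
  .ofLinearMap
    ((lmap fun i ↦ LinearMap.fst R (M i) (N i)).prod (lmap fun i ↦ LinearMap.snd R (M i) (N i)))
    ((lmap fun i ↦ LinearMap.inl R (M i) (N i)).coprod (lmap fun i ↦ LinearMap.inr R (M i) (N i)))
    (by ext <;> simp)
    (by ext <;> simp)

variable {R : Type u} [CommRing R]

theorem IsTensorComplex.nonempty_homology_equiv
    [∀ X : ModuleCat.{u} R, HasProjectiveDimensionLE X 1] {C D : ChainComplex (ModuleCat.{u} R) ℤ}
    [∀ i, Projective (C.X i)] [∀ i, Projective (D.X i)] {T : ChainComplex (ModuleCat.{v} R) ℤ}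
    {ι : ∀ n i : ℤ, C.X i ⊗[R] D.X (n - i) →ₗ[R] T.X n} (h : IsTensorComplex C D T ι) (k : ℤ) :
    Nonempty (T.homology k ≃ₗ[R] (⨁ i, C.homology i ⊗[R] D.homology (k - i)) ×
      ⨁ i, ((Tor (ModuleCat R) 1).obj (C.homology i)).obj (D.homology (k - 1 - i))) := by
  obtain ⟨π, _, _⟩ := exists_quasiIso_homologyComplex C
  have (i : ℤ) : Module.Projective R (D.X i) := (IsProjective.iff_projective _).2 inferInstance
  have := tensorComplex.quasiIso_mapLeft π D
  let e (i : ℤ) := (nonempty_homology_mapHomologicalComplex_iso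
    (MonoidalCategory.tensorLeft (C.homology i)) D
    (by simp; lia : (ComplexShape.down ℤ).Rel (k - i) (k - 1 - i))).some
  exact ⟨h.homologyEquiv (.incl C D) k ≪≫ₗ
    (asIso (HomologicalComplex.homologyMap (tensorComplex.mapLeft D π) k) ≪≫
      tensorComplex.homologyIsoOfZero D (fun _ _ ↦ rfl) k).toLinearEquiv ≪≫ₗ
    congrLinearEquiv (fun i ↦ (e i ≪≫ ModuleCat.biprodIsoProd _ _).toLinearEquiv) ≪≫ₗ
    directSumProdEquiv _ _⟩

theorem exists_split_exact_of_linearEquiv_prod {R : Type*} [Semiring R] {M A B : Type*}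
    [AddCommMonoid M] [AddCommMonoid A] [AddCommMonoid B] [Module R M] [Module R A] [Module R B]
    (e : M ≃ₗ[R] A × B) :
    ∃ (f : A →ₗ[R] M) (g : M →ₗ[R] B), Function.Injective f ∧ Function.Surjective g ∧
      Function.Exact f g ∧ ∃ s : B →ₗ[R] M, g.comp s = LinearMap.id := by
  refine ⟨e.symm.toLinearMap ∘ₗ LinearMap.inl R A B, LinearMap.snd R A B ∘ₗ e.toLinearMap,
    e.symm.injective.comp LinearMap.inl_injective, Prod.snd_surjective.comp e.surjective,
    fun x ↦ ?_, e.symm.toLinearMap ∘ₗ LinearMap.inr R A B, by ext; simp⟩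
  simpa [LinearEquiv.symm_apply_eq, Prod.ext_iff] using eq_comm

theorem kunneth_over_PID_general {R : Type u} [CommRing R]
    (hR : ∀ I : Ideal R, Module.Projective R I) {C D : ChainComplex (ModuleCat.{u} R) ℤ}
    {T : ChainComplex (ModuleCat.{v} R) ℤ}
    (hC : ∀ i, Module.Projective R (C.X i)) (hD : ∀ i, Module.Projective R (D.X i))
    {ι : ∀ n i : ℤ, C.X i ⊗[R] D.X (n - i) →ₗ[R] T.X n} (hT : IsTensorComplex C D T ι) (k : ℤ) :
    ∃ (f : (⨁ i, C.homology i ⊗[R] D.homology (k - i)) →ₗ[R] T.homology k)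
      (g : T.homology k →ₗ[R]
        ⨁ i, ((Tor (ModuleCat R) 1).obj (C.homology i)).obj (D.homology (k - 1 - i))),
      Function.Injective f ∧ Function.Surjective g ∧ Function.Exact f g ∧
        ∃ s : (⨁ i, ((Tor (ModuleCat R) 1).obj (C.homology i)).obj (D.homology (k - 1 - i))) →ₗ[R]
          T.homology k, g.comp s = LinearMap.id := by
  have hdim := hasProjectiveDimensionLE_one_of_projective_ideals hR
  have (i : ℤ) : Projective (C.X i) := (IsProjective.iff_projective _).1 (hC i)
  have (i : ℤ) : Projective (D.X i) := (IsProjective.iff_projective _).1 (hD i)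
  obtain ⟨e⟩ := hT.nonempty_homology_equiv k
  exact exists_split_exact_of_linearEquiv_prod e

end Kunneth

/-- **Künneth theorem over a PID.**  Let `R` be a PID and `C`, `D` chain complexes of
free `R`-modules.  Let `T` be (any model of) the tensor product complex `C ⊗ D`: a chain
complex together with maps `ι n i : C_i ⊗ D_{n-i} → T_n` exhibiting `T_n` as the direct
sum `⊕_{i+j=n} C_i ⊗ D_j`, whose differential is `∂(x ⊗ y) = ∂x ⊗ y + (−1)^i x ⊗ ∂y`.
Then for each `k` there is a split short exact sequence
`0 → ⊕_{i+j=k} H_i(C) ⊗ H_j(D) → H_k(C ⊗ D) → ⊕_{i+j=k−1} Tor₁(H_i(C), H_j(D)) → 0`. -/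
theorem kunneth_over_PID (R : Type) [CommRing R] [IsDomain R] [IsPrincipalIdealRing R]
    (C D : ChainComplex (ModuleCat R) ℤ)
    (hC : ∀ i, Module.Free R (C.X i)) (hD : ∀ i, Module.Free R (D.X i))
    (T : ChainComplex (ModuleCat R) ℤ)
    (ι : ∀ n i : ℤ, (↥(C.X i) ⊗[R] ↥(D.X (n - i))) →ₗ[R] ↥(T.X n))
    (hsum : ∀ n : ℤ, Function.Bijective
      (DirectSum.toModule R ℤ ↥(T.X n) (fun i : ℤ => ι n i)))
    (hd : ∀ (n i : ℤ) (x : ↥(C.X i)) (y : ↥(D.X (n - i))),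
      T.d n (n - 1) (ι n i (x ⊗ₜ[R] y)) =
        ι (n - 1) (i - 1) ((C.d i (i - 1) x) ⊗ₜ[R]
          ((eqToHom (congrArg D.X (by omega : n - i = n - 1 - (i - 1)))) y)) +
        ((Int.negOnePow i : ℤˣ) : ℤ) • ι (n - 1) i (x ⊗ₜ[R] (D.d (n - i) (n - 1 - i) y)))
    (k : ℤ) :
    ∃ (f : (⨁ i : ℤ, (↥(C.homology i) ⊗[R] ↥(D.homology (k - i)))) →ₗ[R]
        ↥(T.homology k))
      (g : ↥(T.homology k) →ₗ[R]
        (⨁ i : ℤ, ↥(((Tor (ModuleCat R) 1).obj (C.homology i)).obj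
          (D.homology (k - 1 - i))))),
      Function.Injective f ∧ Function.Surjective g ∧ Function.Exact f g ∧
        ∃ s : (⨁ i : ℤ, ↥(((Tor (ModuleCat R) 1).obj (C.homology i)).obj
            (D.homology (k - 1 - i)))) →ₗ[R] ↥(T.homology k),
          g.comp s = LinearMap.id := by
  exact kunneth_over_PID_general (fun _ ↦ inferInstance) (fun i ↦ have := hC i; inferInstance)
    (fun i ↦ have := hD i; inferInstance) ⟨hsum, hd⟩ k
end
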